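/- Let τ = {nop, set, swap, free}. A cubic monotone 3-CNF φ has a one-in-three model if and only if the union U^{σ1}_φ has both the τ-SSP and the τ-ESSP, and equivalently if and only if the joining A(U^{σ1}_φ) is τ-feasible (has both the τ-SSP and the τ-ESSP). -/

import Mathlib

/-!
The reduction is correct because inhibiting the event `k` at the state `h_{0,2}` amounts to finding
a one-in-three model, whereas every other separation problem of the gadgets is solvable.

*From the ESSP to a model* (`oneInThree_of_edges`, `exists_oneInThree`). Among `nop`, `set`, `swap`,
`free` only `free` is partial, so a region inhibiting `k` at `h_{0,2}` has `k` free and `h_{0,2}` in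
its support. Along an edge that can be traversed in both directions only `swap` changes the support;
hence `m`, all `v_j` and `q_1` are `swap`, then `F_2` prevents `z` from being `set` or `free`, and
then `G_j` and `D_l` prevent `w_j` and `a_l` from being `swap`. On `T_{i,0}` the support is `0` at
both `k`-edges and `v_{4i}` changes it, so it has to change back at some `X_{i,r}`, which is only
possible if this event is `set`. The gadgets `T_{i,1}`, `T_{i,2}`, `T_{i,3}` do not allow two
`set`-events in a clause. The variables that are `set` thus form a model.

*From a model to the SSP and the ESSP* (`gadget_ussp`, `gadget_uessp`). All gadgets are labelled
paths of one of seven shapes. An event absent from a path is inhibited by the support consisting of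
this path. Most other problems are solved by parity regions, in which one event is `swap`, the event
to be inhibited is `free`, and everything else is `nop`; whether such a region exists is a finite
question about the shapes (`exists_parity`, `exists_odd`). The finitely many exceptions get special
regions: `modelRegion`, built from the model, for `k` at the states where the model matters, and
`freeRegion`, `dropRegion`, `riseRegion`, `zRegion`, `q_region`, `m_region` for the others.

*The joining* (`joining_feasible`, `uessp_of_joining`). Regions of the joining restrict to regions
of the union. Conversely, a region of the union extends to the joining by any valid pattern of zeros
and ones on one block of the connector, since `⊕_i` can bridge any two values at its ends.
A short list of patterns solves all separation problems inside the connector. The remaining problem,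
inhibiting `⊕_i` at a state of `A_i` other than its initial one, needs a region that is `1` at this
state and `0` at the initial state (`gadget_init_sep`).
-/

namespace PetriNets

/-- The eight boolean interactions. -/
inductive Interaction : Type
  | nop | inp | out | set | res | swap | used | free
  deriving DecidableEq

/-- The partial function on `{0,1}` (encoded as `Bool`) denoted by an interaction. -/
def Interaction.apply : Interaction → Bool → Option Bool
  | .nop, x => some x
  | .inp, x => if x then some false else none
  | .out, x => if x then none else some true
  | .set, _ => some true
  | .res, _ => some false
  | .swap, x => some (!x)
  | .used, x => if x then some true else none
  | .free, x => if x then none else some false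

/-- A transition system with states `S`, events `E`, a partial transition
function and an initial state. -/
structure TS (S E : Type) where
  delta : S → E → Option S
  init : S

/-- A `τ`-region of a transition system. -/
structure Region (τ : Set Interaction) {S E : Type} (A : TS S E) where
  sup : S → Bool
  sig : E → Interaction
  sig_mem : ∀ e : E, sig e ∈ τ
  consistent : ∀ (s : S) (e : E) (s' : S), A.delta s e = some s' →
    (sig e).apply (sup s) = some (sup s')

/-- The state separation property. -/
def SSP (τ : Set Interaction) {S E : Type} (A : TS S E) : Prop :=
  ∀ s s' : S, s ≠ s' → ∃ R : Region τ A, R.sup s ≠ R.sup s'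

/-- The event state separation property. -/
def ESSP (τ : Set Interaction) {S E : Type} (A : TS S E) : Prop :=
  ∀ (s : S) (e : E), A.delta s e = none →
    ∃ R : Region τ A, (R.sig e).apply (R.sup s) = none

/-- `τ`-feasibility: both the `τ`-SSP and the `τ`-ESSP. -/
def Feasible (τ : Set Interaction) {S E : Type} (A : TS S E) : Prop :=
  SSP τ A ∧ ESSP τ A

/-- A union of transition systems with pairwise disjoint states (disjointness is
enforced by the sigma type of states) over a common event alphabet. -/
def Union (ι : Type) (S : ι → Type) (E : Type) : Type := (i : ι) → TS (S i) E

/-- A `τ`-region of a union: its restriction to every component is a region. -/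
structure URegion (τ : Set Interaction) {ι : Type} {S : ι → Type} {E : Type}
    (U : Union ι S E) where
  sup : (Σ i : ι, S i) → Bool
  sig : E → Interaction
  sig_mem : ∀ e : E, sig e ∈ τ
  consistent : ∀ (i : ι) (s : S i) (e : E) (s' : S i), (U i).delta s e = some s' →
    (sig e).apply (sup ⟨i, s⟩) = some (sup ⟨i, s'⟩)

/-- SSP for unions: distinct states of a common component are separable. -/
def USSP (τ : Set Interaction) {ι : Type} {S : ι → Type} {E : Type}
    (U : Union ι S E) : Prop :=
  ∀ (i : ι) (s s' : S i), s ≠ s' → ∃ R : URegion τ U, R.sup ⟨i, s⟩ ≠ R.sup ⟨i, s'⟩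

/-- ESSP for unions: every event is inhibitable at every state where it does not occur. -/
def UESSP (τ : Set Interaction) {ι : Type} {S : ι → Type} {E : Type}
    (U : Union ι S E) : Prop :=
  ∀ (e : E) (i : ι) (s : S i), (U i).delta s e = none →
    ∃ R : URegion τ U, (R.sig e).apply (R.sup ⟨i, s⟩) = none

/-- States of the joining `A(U)`: the states of the union together with the
connector states `⊥_0, …, ⊥_{4n}` and `⊤_{i,1}, ⊤_{i,2}, ⊤_{i,3}` (encoded as
`(i, 0), (i, 1), (i, 2)`). -/
abbrev JState (n : ℕ) (S : Fin n → Type) : Type :=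
  (Σ i : Fin n, S i) ⊕ (Fin (4 * n + 1) ⊕ (Fin n × Fin 3))

/-- Events of the joining: the events of the union together with the fresh
events `⊙_i, ⊗_i, ⊖_i, ⊕_i` (encoded as `(i, 0), (i, 1), (i, 2), (i, 3)`). -/
abbrev JEvent (n : ℕ) (E : Type) : Type := E ⊕ (Fin n × Fin 4)

open Classical in
/-- The joining `A(U)` of a union `U = U(A_0, …, A_{n-1})`. -/
noncomputable def joining {n : ℕ} {S : Fin n → Type} {E : Type} (U : Union (Fin n) S E) :
    TS (JState n S) (JEvent n E) where
  init := Sum.inr (Sum.inl ⟨0, by omega⟩)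
  delta := fun st ev =>
    match st, ev with
    | Sum.inl ⟨i, s⟩, Sum.inl e => ((U i).delta s e).map (fun s' => Sum.inl ⟨i, s'⟩)
    | Sum.inl ⟨i, s⟩, Sum.inr jc =>
        if i = jc.1 ∧ jc.2 = (3 : Fin 4) ∧ s = (U i).init
        then some (Sum.inr (Sum.inr (jc.1, (2 : Fin 3)))) else none
    | Sum.inr (Sum.inl _), Sum.inl _ => none
    | Sum.inr (Sum.inl bs), Sum.inr jc =>
        if jc.2 = (1 : Fin 4) then
          -- ⊗ : ⊥_{4i} ↔ ⊥_{4i+1} and ⊥_{4i+3} ↔ ⊥_{4i+4}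
          if bs.val = 4 * jc.1.val then
            some (Sum.inr (Sum.inl ⟨4 * jc.1.val + 1, by have := jc.1.isLt; omega⟩))
          else if bs.val = 4 * jc.1.val + 1 then
            some (Sum.inr (Sum.inl ⟨4 * jc.1.val, by have := jc.1.isLt; omega⟩))
          else if bs.val = 4 * jc.1.val + 3 then
            some (Sum.inr (Sum.inl ⟨4 * jc.1.val + 4, by have := jc.1.isLt; omega⟩))
          else if bs.val = 4 * jc.1.val + 4 then
            some (Sum.inr (Sum.inl ⟨4 * jc.1.val + 3, by have := jc.1.isLt; omega⟩))
          else none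
        else if jc.2 = (0 : Fin 4) then
          -- ⊙ : ⊥_{4i+1} → ⊥_{4i+2} and ⊥_{4i+2} ↔ ⊥_{4i+3}
          if bs.val = 4 * jc.1.val + 1 then
            some (Sum.inr (Sum.inl ⟨4 * jc.1.val + 2, by have := jc.1.isLt; omega⟩))
          else if bs.val = 4 * jc.1.val + 2 then
            some (Sum.inr (Sum.inl ⟨4 * jc.1.val + 3, by have := jc.1.isLt; omega⟩))
          else if bs.val = 4 * jc.1.val + 3 then
            some (Sum.inr (Sum.inl ⟨4 * jc.1.val + 2, by have := jc.1.isLt; omega⟩))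
          else none
        else if jc.2 = (2 : Fin 4) then
          -- ⊖ : ⊥_{4i+2} → ⊤_{i,1}
          if bs.val = 4 * jc.1.val + 2 then
            some (Sum.inr (Sum.inr (jc.1, (0 : Fin 3))))
          else none
        else none
    | Sum.inr (Sum.inr _), Sum.inl _ => none
    | Sum.inr (Sum.inr jt), Sum.inr jc =>
        if jc.1 = jt.1 then
          if jc.2 = (2 : Fin 4) then
            -- ⊖ : ⊤_{i,1} ↔ ⊤_{i,2}
            if jt.2 = (0 : Fin 3) then some (Sum.inr (Sum.inr (jt.1, (1 : Fin 3))))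
            else if jt.2 = (1 : Fin 3) then some (Sum.inr (Sum.inr (jt.1, (0 : Fin 3))))
            else none
          else if jc.2 = (0 : Fin 4) then
            -- ⊙ : ⊤_{i,2} ↔ ⊤_{i,3}
            if jt.2 = (1 : Fin 3) then some (Sum.inr (Sum.inr (jt.1, (2 : Fin 3))))
            else if jt.2 = (2 : Fin 3) then some (Sum.inr (Sum.inr (jt.1, (1 : Fin 3))))
            else none
          else if jc.2 = (3 : Fin 4) then
            -- ⊕ : ⊤_{i,3} ↔ s^i_0
            if jt.2 = (2 : Fin 3) then some (Sum.inl ⟨jt.1, (U jt.1).init⟩)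
            else none
          else none
        else none

/-- The type of nets `{nop, set, swap, free}`, i.e. the single member of `σ1`. -/
def tau1 : Set Interaction :=
  {Interaction.nop, Interaction.set, Interaction.swap, Interaction.free}

/-- Membership in `σ2 = { {nop, set, swap, used} ∪ ω : ω ⊆ {res, free} }`. -/
def sigma2mem (τ : Set Interaction) : Prop :=
  ∃ ω : Set Interaction, ω ⊆ {Interaction.res, Interaction.free} ∧
    τ = ({Interaction.nop, Interaction.set, Interaction.swap, Interaction.used} :
      Set Interaction) ∪ ω

/-- Direction of an edge of a chain-shaped transition system. -/
inductive Dir : Type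
  | fwd | bwd | both
  deriving DecidableEq

def Dir.allowsFwd : Dir → Bool
  | .fwd => true
  | .both => true
  | .bwd => false

def Dir.allowsBwd : Dir → Bool
  | .bwd => true
  | .both => true
  | .fwd => false

def echk {E : Type} [DecidableEq E] (o : Option (E × Dir)) (e : E) (fwd : Bool) : Bool :=
  match o with
  | none => false
  | some (e', d) => decide (e' = e) && (if fwd then d.allowsFwd else d.allowsBwd)

/-- Transition function of a chain with edge specification `spec`:
`spec[t] = (e, d)` means an edge between states `t` and `t + 1` labelled `e`
with direction `d` (forward, backward or both). -/
def chainDelta {E : Type} [DecidableEq E] (spec : List (E × Dir)) (s : ℕ) (e : E) :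
    Option ℕ :=
  if echk spec[s]? e true = true then some (s + 1)
  else if s ≠ 0 ∧ echk spec[s - 1]? e false = true then some (s - 1)
  else none

/-- A chain-shaped transition system with `n + 1` states whose initial state is
the last state of the chain. -/
def chainTS {E : Type} [DecidableEq E] (n : ℕ) (spec : List (E × Dir)) :
    TS (Fin (n + 1)) E where
  init := Fin.last n
  delta := fun s e => (chainDelta spec s.val e).bind fun r =>
    if h : r < n + 1 then some ⟨r, h⟩ else none

/-- Index set of the gadget transition systems of `U^σ_φ`. -/
inductive GIdx (m : ℕ) : Type
  | H : Fin (4 * m) → GIdx m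
  | F0 : GIdx m
  | F1 : GIdx m
  | F2 : GIdx m
  | G : Fin m → GIdx m
  | D : Fin (3 * m) → GIdx m
  | T0 : Fin m → GIdx m
  | T1 : Fin m → GIdx m
  | T2 : Fin m → GIdx m
  | T3 : Fin m → GIdx m
  deriving DecidableEq, Fintype

/-- Events of the gadgets of `U^σ_φ`; `u g` is the unique fresh event of gadget `g`
and `x vv` is the event of the variable `vv` of `φ`. -/
inductive GEvent (V : Type) (m : ℕ) : Type
  | k : GEvent V m
  | mev : GEvent V m
  | z : GEvent V m
  | q : Fin 4 → GEvent V m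
  | v : Fin (4 * m) → GEvent V m
  | w : Fin m → GEvent V m
  | y : Fin m → GEvent V m
  | p : Fin (3 * m) → GEvent V m
  | a : Fin (3 * m) → GEvent V m
  | x : V → GEvent V m
  | u : GIdx m → GEvent V m
  deriving DecidableEq

/-- State spaces of the gadget transition systems. -/
def GS (m : ℕ) : GIdx m → Type
  | .H _ => Fin 6
  | .F0 => Fin 9
  | .F1 => Fin 6
  | .F2 => Fin 10
  | .G _ => Fin 9
  | .D _ => Fin 9
  | .T0 _ => Fin 18
  | .T1 _ => Fin 5
  | .T2 _ => Fin 5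
  | .T3 _ => Fin 5

def fmul4 {m : ℕ} (i : Fin m) (o : Fin 4) : Fin (4 * m) :=
  ⟨4 * i.val + o.val, by have h1 := i.isLt; have h2 := o.isLt; omega⟩

def fmul3 {m : ℕ} (i : Fin m) (o : Fin 3) : Fin (3 * m) :=
  ⟨3 * i.val + o.val, by have h1 := i.isLt; have h2 := o.isLt; omega⟩

/-- The union `U^σ_φ` for a cubic monotone 3-CNF `φ` given by its clauses
`X : Fin m → Fin 3 → V`.  For `b = false` this is `U^{σ1}_φ`, for `b = true`
it is `U^{σ2}_φ` (in which the events `v_{4i}` and `w_i` of `T_{i,0}` are exchanged). -/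
def gadget {V : Type} [DecidableEq V] (m : ℕ) (X : Fin m → Fin 3 → V) (b : Bool) :
    Union (GIdx m) (GS m) (GEvent V m) := fun idx =>
  match idx with
  | .H j => chainTS 5
      [(.k, .both), (.mev, .both), (.v j, .both), (.k, .both), (.u (.H j), .both)]
  | .F0 => chainTS 8
      [(.k, .both), (.mev, .both), (.q 0, .both), (.k, .both), (.mev, .both),
       (.q 1, .both), (.k, .both), (.u .F0, .both)]
  | .F1 => chainTS 5
      [(.k, .both), (.q 2, .both), (.q 3, .both), (.k, .both), (.u .F1, .both)]
  | .F2 => chainTS 9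
      [(.k, .both), (.q 2, .both), (.q 0, .both), (.z, .both), (.q 1, .both),
       (.z, .both), (.q 3, .both), (.k, .both), (.u .F2, .both)]
  | .G j => chainTS 8
      [(.k, .both), (.y j, .both), (.z, .fwd), (.z, .both), (.y j, .both),
       (.w j, .both), (.k, .both), (.u (.G j), .both)]
  | .D l => chainTS 8
      [(.k, .both), (.p l, .both), (.z, .fwd), (.z, .both), (.p l, .both),
       (.a l, .both), (.k, .both), (.u (.D l), .both)]
  | .T0 i => chainTS 17
      [(.k, .both),
       ((if b then .w i else .v (fmul4 i 0)), .both),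
       (.a (fmul3 i 0), .both),
       (.x (X i 0), .both),
       (.x (X i 0), .bwd),
       (.a (fmul3 i 0), .both),
       (.a (fmul3 i 1), .both),
       (.x (X i 1), .both),
       (.x (X i 1), .bwd),
       (.a (fmul3 i 1), .both),
       (.a (fmul3 i 2), .both),
       (.x (X i 2), .both),
       (.x (X i 2), .bwd),
       (.a (fmul3 i 2), .both),
       ((if b then .v (fmul4 i 0) else .w i), .both),
       (.k, .both),
       (.u (.T0 i), .both)]
  | .T1 i => chainTS 4
      [(.x (X i 0), .both), (.v (fmul4 i 1), .both), (.x (X i 1), .both),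
       (.u (.T1 i), .both)]
  | .T2 i => chainTS 4
      [(.x (X i 0), .both), (.v (fmul4 i 2), .both), (.x (X i 2), .both),
       (.u (.T2 i), .both)]
  | .T3 i => chainTS 4
      [(.x (X i 1), .both), (.v (fmul4 i 3), .both), (.x (X i 2), .both),
       (.u (.T3 i), .both)]

/-- `φ` is a cubic monotone 3-CNF: the three variables of every clause are
pairwise distinct, and every variable occurs in exactly three clauses. -/
def Cubic {V : Type} [Fintype V] [DecidableEq V] (m : ℕ) (X : Fin m → Fin 3 → V) : Prop :=
  (∀ i : Fin m, Function.Injective (X i)) ∧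
  ∀ vv : V, (Finset.univ.filter (fun pr : Fin m × Fin 3 => X pr.1 pr.2 = vv)).card = 3

/-- `M` is a one-in-three model of `φ`: it contains exactly one variable of
every clause. -/
def OneInThree {V : Type} (m : ℕ) (X : Fin m → Fin 3 → V) (M : Set V) : Prop :=
  ∀ i : Fin m, ∃! r : Fin 3, X i r ∈ M

def hidx {m : ℕ} (hm : 0 < m) : Fin (4 * m) := ⟨0, by omega⟩

/-- The state `h_{0,2}` of the gadget `H_0`. -/
def h02 {m : ℕ} (hm : 0 < m) : Σ i : GIdx m, GS m i := ⟨GIdx.H (hidx hm), (2 : Fin 6)⟩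

/-- The gadget union re-indexed over `Fin (card (GIdx m))`, so that its joining
is defined. -/
noncomputable def gadgetFin {V : Type} [DecidableEq V] (m : ℕ)
    (X : Fin m → Fin 3 → V) (b : Bool) :
    Union (Fin (Fintype.card (GIdx m)))
      (fun j => GS m ((Fintype.equivFin (GIdx m)).symm j)) (GEvent V m) :=
  fun j => gadget m X b ((Fintype.equivFin (GIdx m)).symm j)

/-! ### Extending regions of a union to its joining -/

/-- The strongest interaction of `tau1` suggested by a list of transitions between support
values: `free` if all of them are loops at `0`, otherwise `nop` if all are loops, otherwise `swap`
if all change the value, otherwise `set`. -/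
def inferSig (l : List (Bool × Bool)) : Interaction :=
  if l.all (fun q => !q.1 && !q.2) then .free
  else if l.all (fun q => q.1 == q.2) then .nop
  else if l.all (fun q => q.1 != q.2) then .swap
  else .set

lemma inferSig_mem (l : List (Bool × Bool)) : inferSig l ∈ tau1 := by
  unfold inferSig tau1; split_ifs <;> simp

/-- The transitions of the events `⊙, ⊗, ⊖` (numbered `0, 1, 2`) of one block of the connector,
read through a pattern: position `0` is `⊥_{4i}`, positions `1, 2, 3` are
`⊥_{4i+1}, ⊥_{4i+2}, ⊥_{4i+3}`, position `4` is `⊥_{4i+4}`, and positions `5, 6, 7` are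
`⊤_{i,1}, ⊤_{i,2}, ⊤_{i,3}`. -/
def blockTrans (p : Fin 8 → Bool) : Fin 3 → List (Bool × Bool)
  | 0 => [(p 1, p 2), (p 2, p 3), (p 3, p 2), (p 6, p 7), (p 7, p 6)]
  | 1 => [(p 0, p 1), (p 1, p 0), (p 3, p 4), (p 4, p 3)]
  | 2 => [(p 2, p 5), (p 5, p 6), (p 6, p 5)]

/-- A pattern is valid if each of `⊙, ⊗, ⊖` can be given an interaction on its block. -/
def ValidPattern (p : Fin 8 → Bool) : Prop :=
  ∀ c, ∀ q ∈ blockTrans p c, (inferSig (blockTrans p c)).apply q.1 = some q.2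

instance (p : Fin 8 → Bool) : Decidable (ValidPattern p) := by
  unfold ValidPattern; infer_instance

/-- The position of a connector state relative to block `i`; everything to the left of the block
shares position `0` with `⊥_{4i}`, everything to its right shares position `4` with `⊥_{4i+4}`. -/
def pos {n : ℕ} (i : Fin n) : Fin (4 * n + 1) ⊕ (Fin n × Fin 3) → Fin 8
  | .inl b => if b.val ≤ 4 * i.val then 0 else if b.val = 4 * i.val + 1 then 1
      else if b.val = 4 * i.val + 2 then 2 else if b.val = 4 * i.val + 3 then 3 else 4
  | .inr jt => if jt.1 = i then (if jt.2 = 0 then 5 else if jt.2 = 1 then 6 else 7)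
      else if jt.1 < i then 0 else 4

lemma pos_left {n : ℕ} (i : Fin n) (b : Fin (4 * n + 1)) (h : b.val ≤ 4 * i.val) :
    pos i (.inl b) = 0 := by simp [pos, h]

lemma pos_right {n : ℕ} (i : Fin n) (b : Fin (4 * n + 1)) (h : 4 * i.val + 4 ≤ b.val) :
    pos i (.inl b) = 4 := by
  simp only [pos]; repeat rw [if_neg (by omega)]

lemma pos_one {n : ℕ} (i : Fin n) (b : Fin (4 * n + 1)) (h : b.val = 4 * i.val + 1) :
    pos i (.inl b) = 1 := by simp [pos, h]

lemma pos_two {n : ℕ} (i : Fin n) (b : Fin (4 * n + 1)) (h : b.val = 4 * i.val + 2) :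
    pos i (.inl b) = 2 := by simp [pos, h]

lemma pos_three {n : ℕ} (i : Fin n) (b : Fin (4 * n + 1)) (h : b.val = 4 * i.val + 3) :
    pos i (.inl b) = 3 := by simp [pos, h]

lemma pos_top_lt {n : ℕ} (i j : Fin n) (t : Fin 3) (h : j < i) : pos i (.inr (j, t)) = 0 := by
  simp [pos, h, h.ne]

lemma pos_top_gt {n : ℕ} (i j : Fin n) (t : Fin 3) (h : i < j) : pos i (.inr (j, t)) = 4 := by
  simp [pos, h.ne', h.not_gt]

lemma pos_top_eq {n : ℕ} (i : Fin n) (t : Fin 3) :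
    pos i (.inr (i, t)) = if t = 0 then 5 else if t = 1 then 6 else 7 := by
  simp [pos]

section joining
variable {n : ℕ} {S : Fin n → Type} {E : Type}

/-- Support of the extension of a union region by a pattern on block `i`. -/
def extSup {U : Union (Fin n) S E} (R : URegion tau1 U) (i : Fin n) (p : Fin 8 → Bool) :
    JState n S → Bool
  | .inl s => R.sup s
  | .inr c => p (pos i c)

/-- Signature of the extension: `⊙, ⊗, ⊖` of block `i` follow the pattern, those of other blocks
loop at a constant value, and `⊕_j` bridges the values at its two ends. -/
def extSig {U : Union (Fin n) S E} (R : URegion tau1 U) (i : Fin n) (p : Fin 8 → Bool) :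
    JEvent n E → Interaction
  | .inl e => R.sig e
  | .inr jc =>
      if h : jc.2.val < 3 then
        if jc.1 = i then inferSig (blockTrans p ⟨jc.2.val, h⟩)
        else if jc.1 < i then inferSig [(p 0, p 0)] else inferSig [(p 4, p 4)]
      else inferSig [(R.sup ⟨jc.1, (U jc.1).init⟩, p (pos i (.inr (jc.1, 2))))]

lemma inferSig_loop (a : Bool) : (inferSig [(a, a)]).apply a = some a := by
  cases a <;> rfl

lemma inferSig_edge (a b : Bool) : (inferSig [(a, b)]).apply a = some b := by
  cases a <;> cases b <;> rfl

lemma inferSig_edge' (a b : Bool) : (inferSig [(a, b)]).apply b = some a := by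
  cases a <;> cases b <;> rfl

/-- The connector transitions leaving a state `⊥_b`. -/
lemma joining_bot {U : Union (Fin n) S E} {b : Fin (4 * n + 1)} {j : Fin n} {c : Fin 4}
    {s' : JState n S} (h : (joining U).delta (.inr (.inl b)) (.inr (j, c)) = some s') :
    (c = 2 ∧ b.val = 4 * j.val + 2 ∧ s' = .inr (.inr (j, 0))) ∨
    ∃ b' : Fin (4 * n + 1), s' = .inr (.inl b') ∧
      ((c = 1 ∧ b.val = 4 * j.val ∧ b'.val = 4 * j.val + 1) ∨
       (c = 1 ∧ b.val = 4 * j.val + 1 ∧ b'.val = 4 * j.val) ∨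
       (c = 1 ∧ b.val = 4 * j.val + 3 ∧ b'.val = 4 * j.val + 4) ∨
       (c = 1 ∧ b.val = 4 * j.val + 4 ∧ b'.val = 4 * j.val + 3) ∨
       (c = 0 ∧ b.val = 4 * j.val + 1 ∧ b'.val = 4 * j.val + 2) ∨
       (c = 0 ∧ b.val = 4 * j.val + 2 ∧ b'.val = 4 * j.val + 3) ∨
       (c = 0 ∧ b.val = 4 * j.val + 3 ∧ b'.val = 4 * j.val + 2)) := by
  simp only [joining] at h
  split_ifs at h <;> simp only [Option.some.injEq] at h <;> subst h <;> simp_all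

/-- The connector transitions leaving a state `⊤_{j,t}`. -/
lemma joining_top {U : Union (Fin n) S E} {j' j : Fin n} {t : Fin 3} {c : Fin 4}
    {s' : JState n S} (h : (joining U).delta (.inr (.inr (j', t))) (.inr (j, c)) = some s') :
    j' = j ∧
    ((c = 3 ∧ t = 2 ∧ s' = .inl ⟨j, (U j).init⟩) ∨
     (c = 2 ∧ t = 0 ∧ s' = .inr (.inr (j, 1))) ∨
     (c = 2 ∧ t = 1 ∧ s' = .inr (.inr (j, 0))) ∨
     (c = 0 ∧ t = 1 ∧ s' = .inr (.inr (j, 2))) ∨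
     (c = 0 ∧ t = 2 ∧ s' = .inr (.inr (j, 1)))) := by
  simp only [joining] at h
  split_ifs at h with hj <;> simp only [Option.some.injEq] at h <;> subst h <;> subst hj <;>
    simp_all

/-- A pattern on block `i` that is valid extends every region of the union to the joining. -/
noncomputable def ext {U : Union (Fin n) S E} (R : URegion tau1 U) (i : Fin n) (p : Fin 8 → Bool)
    (hp : ValidPattern p) : Region tau1 (joining U) where
  sup := extSup R i p
  sig := extSig R i p
  sig_mem := by
    rintro (e | ⟨j, c⟩)
    · exact R.sig_mem e
    · simp only [extSig]; split_ifs <;> exact inferSig_mem _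
  consistent := by
    have h0 := hp 0
    have h1 := hp 1
    have h2 := hp 2
    simp only [blockTrans, List.forall_mem_cons, List.not_mem_nil, false_imp_iff, implies_true,
      and_true] at h0 h1 h2
    rintro (⟨j, s⟩ | b | ⟨j, t⟩) (e | ⟨j', c⟩) s' h
    · simp only [joining, Option.map_eq_some_iff] at h
      obtain ⟨r, hr, rfl⟩ := h
      exact R.consistent _ _ _ _ hr
    · simp only [joining, Option.ite_none_right_eq_some, Option.some.injEq] at h
      obtain ⟨⟨rfl, rfl, rfl⟩, rfl⟩ := h
      exact inferSig_edge _ _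
    · simp [joining] at h
    · rcases joining_bot h with ⟨rfl, hb, rfl⟩ | ⟨b', rfl, hb⟩
      · rcases lt_trichotomy j' i with hlt | rfl | hgt
        · simp [extSig, extSup, pos_left i b (by omega), pos_top_lt i j' _ hlt, hlt, hlt.ne,
            inferSig_loop]
        · simpa [extSig, extSup, blockTrans, pos_two _ b hb, pos_top_eq] using h2.1
        · simp [extSig, extSup, pos_right i b (by omega), pos_top_gt i j' _ hgt, hgt.not_gt,
            hgt.ne', inferSig_loop]
      · rcases lt_trichotomy j' i with hlt | rfl | hgt
        · have hc : c.val < 3 := by rcases hb with h | h | h | h | h | h | h <;> simp [h.1]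
          simp [extSig, extSup, pos_left i b (by omega), pos_left i b' (by omega), hlt, hlt.ne,
            inferSig_loop, hc]
        · rcases hb with ⟨rfl, hb, hb'⟩ | ⟨rfl, hb, hb'⟩ | ⟨rfl, hb, hb'⟩ | ⟨rfl, hb, hb'⟩ |
            ⟨rfl, hb, hb'⟩ | ⟨rfl, hb, hb'⟩ | ⟨rfl, hb, hb'⟩
          · simpa [extSig, extSup, blockTrans, pos_left _ b hb.le, pos_one _ b' hb'] using h1.1
          · simpa [extSig, extSup, blockTrans, pos_left _ b' hb'.le, pos_one _ b hb] using h1.2.1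
          · simpa [extSig, extSup, blockTrans, pos_right _ b' hb'.ge, pos_three _ b hb] using
              h1.2.2.1
          · simpa [extSig, extSup, blockTrans, pos_right _ b hb.ge, pos_three _ b' hb'] using
              h1.2.2.2
          · simpa [extSig, extSup, blockTrans, pos_one _ b hb, pos_two _ b' hb'] using h0.1
          · simpa [extSig, extSup, blockTrans, pos_two _ b hb, pos_three _ b' hb'] using h0.2.1
          · simpa [extSig, extSup, blockTrans, pos_three _ b hb, pos_two _ b' hb'] using h0.2.2.1
        · have hc : c.val < 3 := by rcases hb with h | h | h | h | h | h | h <;> simp [h.1]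
          simp [extSig, extSup, pos_right i b (by omega), pos_right i b' (by omega), hgt.not_gt,
            hgt.ne', inferSig_loop, hc]
    · simp [joining] at h
    · obtain ⟨rfl, hb⟩ := joining_top h
      rcases hb with ⟨rfl, rfl, rfl⟩ | hb
      · exact inferSig_edge' _ _
      · have hc : c.val < 3 := by rcases hb with h | h | h | h <;> simp [h.1]
        obtain ⟨t', rfl⟩ : ∃ t', s' = .inr (.inr (j, t')) := by
          rcases hb with h | h | h | h <;> exact ⟨_, h.2.2⟩
        rcases lt_trichotomy j i with hlt | rfl | hgt
        · simp [extSig, extSup, pos_top_lt i j _ hlt, hlt, hlt.ne, inferSig_loop, hc]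
        · rcases hb with ⟨rfl, rfl, hs⟩ | ⟨rfl, rfl, hs⟩ | ⟨rfl, rfl, hs⟩ | ⟨rfl, rfl, hs⟩ <;>
            obtain rfl : t' = _ := by simpa using hs
          · simpa [extSig, extSup, blockTrans, pos_top_eq] using h2.2.1
          · simpa [extSig, extSup, blockTrans, pos_top_eq] using h2.2.2
          · simpa [extSig, extSup, blockTrans, pos_top_eq] using h0.2.2.2.1
          · simpa [extSig, extSup, blockTrans, pos_top_eq] using h0.2.2.2.2
        · simp [extSig, extSup, pos_top_gt i j _ hgt, hgt.not_gt, hgt.ne', inferSig_loop, hc]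

/-- The region of a union that is constant on every component and lets every event be `nop`. -/
def constRegion (U : Union (Fin n) S E) (f : Fin n → Bool) : URegion tau1 U where
  sup s := f s.1
  sig _ := .nop
  sig_mem _ := by simp [tau1]
  consistent _ _ _ _ _ := rfl

/-- The region of a union with empty support in which every event is `free`. -/
def zeroRegion (U : Union (Fin n) S E) : URegion tau1 U where
  sup _ := false
  sig _ := .free
  sig_mem _ := by simp [tau1]
  consistent _ _ _ _ _ := rfl

/-- The patterns sufficing for all separations in the connector. -/
def patterns : List (Fin 8 → Bool) :=
  [![true, false, false, false, true, false, false, false],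
   ![false, false, false, false, false, true, false, false],
   ![false, false, true, false, false, true, true, false],
   ![false, false, false, false, false, true, true, true],
   ![true, true, false, true, true, false, false, true],
   ![true, true, false, true, true, true, true, false],
   ![false, false, true, true, true, true, true, true],
   ![false, true, true, true, false, true, true, true],
   ![true, false, true, true, false, true, true, true]]

/-- Whether the event `⊙, ⊗, ⊖, ⊕` (numbered `0, 1, 2, 3`) of a block occurs at a position of
this block. -/
def occAt : Fin 4 → Fin 8 → Bool
  | 0, q => q == 1 || q == 2 || q == 3 || q == 6 || q == 7
  | 1, q => q == 0 || q == 1 || q == 3 || q == 4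
  | 2, q => q == 2 || q == 5 || q == 6
  | 3, q => q == 7

lemma patterns_valid : ∀ p ∈ patterns, ValidPattern p := by decide +kernel

lemma valid_const (b : Bool) : ValidPattern (fun _ => b) := by
  cases b <;> decide +kernel

lemma patterns_separate : ∀ q q' : Fin 8, q ≠ q' → ∃ p ∈ patterns, p q ≠ p q' := by
  decide +kernel

lemma patterns_inhibit : ∀ c : Fin 3, ∀ q : Fin 8, occAt c.castSucc q = false →
    ∃ p ∈ patterns, inferSig (blockTrans p c) = .free ∧ p q = true := by
  decide +kernel

/-- For inhibiting `⊕_j` at connector states: `⊤_{j,3}` is the only one of them at which `⊕_j`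
occurs, and it has position `7`. -/
lemma patterns_inhibit_top : ∀ q : Fin 8, q ≠ 7 → ∃ p ∈ patterns, p 7 = false ∧ p q = true := by
  decide +kernel

/-- For inhibiting `⊗_j` at states left of its block, where `p 4` is the value on the block `j`. -/
lemma patterns_left : ∀ q : Fin 8, q ≠ 4 → ∃ p ∈ patterns, p 4 = false ∧ p q = true := by
  decide +kernel

/-- For inhibiting `⊗_j` at states right of its block, where `p 0` is the value on the block `j`. -/
lemma patterns_right : ∀ q : Fin 8, q ≠ 0 → ∃ p ∈ patterns, p 0 = false ∧ p q = true := by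
  decide +kernel

/-- Distinct connector states have distinct positions relative to a suitable block. -/
lemma exists_pos_ne {c c' : Fin (4 * n + 1) ⊕ (Fin n × Fin 3)} (h : c ≠ c') :
    ∃ i : Fin n, pos i c ≠ pos i c' := by
  have bots : ∀ b b' : Fin (4 * n + 1), b < b' → ∃ i : Fin n, pos i (.inl b) ≠ pos i (.inl b') := by
    intro b b' hb
    have hb := Fin.lt_def.1 hb
    refine ⟨⟨b.val / 4, by omega⟩, ?_⟩
    simp only [pos]
    split_ifs <;> first | decide | omega
  have mixed : ∀ (b : Fin (4 * n + 1)) (j : Fin n) (t : Fin 3),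
      pos j (.inl b) ≠ pos j (.inr (j, t)) := by
    intro b j t
    simp only [pos]
    split_ifs <;> decide
  rcases c with b | ⟨j, t⟩ <;> rcases c' with b' | ⟨j', t'⟩
  · rcases lt_trichotomy b b' with hb | rfl | hb
    · exact bots _ _ hb
    · exact absurd rfl h
    · obtain ⟨i, hi⟩ := bots _ _ hb
      exact ⟨i, hi.symm⟩
  · exact ⟨j', mixed _ _ _⟩
  · exact ⟨j, (mixed _ _ _).symm⟩
  · refine ⟨j, ?_⟩
    rcases lt_trichotomy j' j with hlt | rfl | hgt
    · rw [pos_top_lt _ _ _ hlt, pos_top_eq]; split_ifs <;> decide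
    · rw [pos_top_eq, pos_top_eq]
      have ht : t ≠ t' := fun e => h (by rw [e])
      clear h; revert t t'; decide
    · rw [pos_top_gt _ _ _ hgt, pos_top_eq]; split_ifs <;> decide

/-- A connector event that does not occur at a connector state does not occur at its position,
except that `⊗_j` may fail to occur at states merely sharing position `0` or `4` with its ends. -/
lemma occAt_of_none {U : Union (Fin n) S E} {st : Fin (4 * n + 1) ⊕ (Fin n × Fin 3)} {j : Fin n}
    {c : Fin 4} (h : (joining U).delta (.inr st) (.inr (j, c)) = none) :
    occAt c (pos j st) = false ∨ c = 1 ∧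
      ((∃ i < j, pos i st ≠ 4) ∨ (∃ i > j, pos i st ≠ 0)) := by
  rcases st with b | ⟨j', t⟩
  · by_cases hc : c = 1 ∧ (b.val < 4 * j.val ∨ 4 * j.val + 4 < b.val)
    · refine Or.inr ⟨hc.1, ?_⟩
      rcases hc.2 with hb | hb
      · refine Or.inl ⟨⟨b.val / 4, by omega⟩, by rw [Fin.lt_def]; simp only; omega, ?_⟩
        simp only [pos]
        split_ifs <;> first | decide | omega
      · refine Or.inr ⟨⟨(b.val - 1) / 4, by omega⟩,
          by rw [gt_iff_lt, Fin.lt_def]; simp only; omega, ?_⟩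
        simp only [pos]
        split_ifs <;> first | decide | omega
    · left
      simp only [joining] at h
      fin_cases c <;> simp at h hc <;> simp only [pos] <;> split_ifs <;>
        first | rfl | (exfalso; split_ifs at h <;> omega)
  · rcases lt_trichotomy j' j with hlt | rfl | hgt
    · by_cases hc : c = 1
      · exact Or.inr ⟨hc, Or.inl ⟨j', hlt, by rw [pos_top_eq]; split_ifs <;> decide⟩⟩
      · left; rw [pos_top_lt _ _ _ hlt]; clear h; revert c; decide
    · left
      simp only [joining] at h
      rw [pos_top_eq]
      fin_cases c <;> fin_cases t <;> simp at h <;> rfl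
    · by_cases hc : c = 1
      · exact Or.inr ⟨hc, Or.inr ⟨j', hgt, by rw [pos_top_eq]; split_ifs <;> decide⟩⟩
      · left; rw [pos_top_gt _ _ _ hgt]; clear h; revert c; decide

/-- If a union has the SSP and the ESSP and every state can be separated from the initial state of
its component by a region that is `0` at the initial state, then its joining is feasible. -/
theorem joining_feasible (U : Union (Fin n) S E) (i₀ : Fin n) (h1 : USSP tau1 U)
    (h2 : UESSP tau1 U)
    (h3 : ∀ i s, s ≠ (U i).init → ∃ R : URegion tau1 U,
      R.sup ⟨i, (U i).init⟩ = false ∧ R.sup ⟨i, s⟩ = true) :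
    Feasible tau1 (joining U) := by
  constructor
  · rintro (⟨i, s⟩ | c) (⟨i', s'⟩ | c') hne
    · by_cases hi : i = i'
      · subst hi
        obtain ⟨R, hR⟩ := h1 i s s' (fun e => hne (by rw [e]))
        exact ⟨ext R i₀ _ (valid_const false), hR⟩
      · exact ⟨ext (constRegion U (fun j => decide (j = i))) i₀ _ (valid_const false),
          by simpa [ext, extSup, constRegion] using Ne.symm hi⟩
    · exact ⟨ext (constRegion U fun _ => true) i₀ _ (valid_const false), by
        simp [ext, extSup, constRegion]⟩
    · exact ⟨ext (constRegion U fun _ => true) i₀ _ (valid_const false), by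
        simp [ext, extSup, constRegion]⟩
    · obtain ⟨i, hi⟩ := exists_pos_ne (c := c) (c' := c') (fun e => hne (by rw [e]))
      obtain ⟨p, hp, hq⟩ := patterns_separate _ _ hi
      exact ⟨ext (zeroRegion U) i p (patterns_valid p hp), hq⟩
  · rintro (⟨i, s⟩ | st) (e | ⟨j, c⟩) h
    · have h' : (U i).delta s e = none := by simpa [joining] using h
      obtain ⟨R, hR⟩ := h2 e i s h'
      exact ⟨ext R i₀ _ (valid_const false), hR⟩
    · by_cases hc : c = 3
      · subst hc
        by_cases hi : i = j
        · subst hi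
          have hs : s ≠ (U i).init := by simpa [joining] using h
          obtain ⟨R, hR0, hR1⟩ := h3 i s hs
          refine ⟨ext R i _ (valid_const false), ?_⟩
          simp [ext, extSig, extSup, hR0, hR1, inferSig, Interaction.apply]
        · refine ⟨ext (constRegion U (fun j => decide (j = i))) i _ (valid_const false), ?_⟩
          simp [ext, extSig, extSup, constRegion, Ne.symm hi, inferSig, Interaction.apply]
      · refine ⟨ext (constRegion U (fun _ => true)) j _ (valid_const false), ?_⟩
        fin_cases c <;> first
          | exact absurd rfl hc
          | simp [ext, extSig, extSup, constRegion, inferSig, blockTrans, Interaction.apply]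
    · exact ⟨ext (zeroRegion U) i₀ _ (valid_const true), rfl⟩
    · rcases occAt_of_none h with hocc | ⟨rfl, ⟨i, hi, hpos⟩ | ⟨i, hi, hpos⟩⟩
      · by_cases hc : c.val < 3
        · obtain ⟨p, hp, hf, hq⟩ := patterns_inhibit ⟨c.val, hc⟩ _ hocc
          refine ⟨ext (zeroRegion U) j p (patterns_valid p hp), ?_⟩
          simp [ext, extSig, extSup, hc, hf, hq, Interaction.apply]
        · obtain rfl : c = 3 := by omega
          obtain ⟨p, hp, hf, hq⟩ := patterns_inhibit_top (pos j st) (by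
            intro hq; rw [hq] at hocc; exact absurd hocc (by decide))
          refine ⟨ext (zeroRegion U) j p (patterns_valid p hp), ?_⟩
          simp [ext, extSig, extSup, zeroRegion, pos_top_eq, hf, hq, inferSig, Interaction.apply]
      · obtain ⟨p, hp, hf, hq⟩ := patterns_left _ hpos
        refine ⟨ext (zeroRegion U) i p (patterns_valid p hp), ?_⟩
        simp [ext, extSig, extSup, hf, hq, hi.ne', not_lt_of_gt hi, inferSig, Interaction.apply]
      · obtain ⟨p, hp, hf, hq⟩ := patterns_right _ hpos
        refine ⟨ext (zeroRegion U) i p (patterns_valid p hp), ?_⟩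
        simp [ext, extSig, extSup, hf, hq, hi.ne, hi, inferSig, Interaction.apply]

end joining

/-! ### The gadgets as labelled paths -/

/-- The isomorphism types of the gadgets, disregarding the names of their events. -/
inductive Shape : Type
  | H | F0 | F1 | F2 | G | T0 | T1
  deriving DecidableEq

/-- The sequence of edge labels of a shape, where distinct numbers stand for distinct events. -/
def Shape.loc : Shape → List ℕ
  | .H => [0, 1, 2, 0, 3]
  | .F0 => [0, 1, 2, 0, 1, 3, 0, 4]
  | .F1 => [0, 1, 2, 0, 3]
  | .F2 => [0, 1, 2, 3, 4, 3, 5, 0, 6]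
  | .G => [0, 1, 2, 2, 1, 3, 0, 4]
  | .T0 => [0, 1, 2, 3, 3, 2, 4, 5, 5, 4, 6, 7, 7, 6, 8, 0, 9]
  | .T1 => [0, 1, 2, 3]

/-- The direction of the edge number `t` of a shape. -/
def Shape.dir : Shape → ℕ → Dir
  | .G, t => if t = 2 then .fwd else .both
  | .T0, t => if t = 4 ∨ t = 8 ∨ t = 12 then .bwd else .both
  | _, _ => .both

/-- The shape of a gadget. -/
def GIdx.shape {m : ℕ} : GIdx m → Shape
  | .H _ => .H
  | .F0 => .F0
  | .F1 => .F1
  | .F2 => .F2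
  | .G _ => .G
  | .D _ => .G
  | .T0 _ => .T0
  | .T1 _ => .T1
  | .T2 _ => .T1
  | .T3 _ => .T1

section paths
variable {V : Type} {m : ℕ}

/-- The event denoted by a label of the shape of a gadget. -/
def interp (X : Fin m → Fin 3 → V) : GIdx m → ℕ → GEvent V m
  | .H _, 0 => .k
  | .H _, 1 => .mev
  | .H j, 2 => .v j
  | .F0, 0 => .k
  | .F0, 1 => .mev
  | .F0, 2 => .q 0
  | .F0, 3 => .q 1
  | .F1, 0 => .k
  | .F1, 1 => .q 2
  | .F1, 2 => .q 3
  | .F2, 0 => .k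
  | .F2, 1 => .q 2
  | .F2, 2 => .q 0
  | .F2, 3 => .z
  | .F2, 4 => .q 1
  | .F2, 5 => .q 3
  | .G _, 0 => .k
  | .G j, 1 => .y j
  | .G _, 2 => .z
  | .G j, 3 => .w j
  | .D _, 0 => .k
  | .D l, 1 => .p l
  | .D _, 2 => .z
  | .D l, 3 => .a l
  | .T0 _, 0 => .k
  | .T0 i, 1 => .v (fmul4 i 0)
  | .T0 i, 2 => .a (fmul3 i 0)
  | .T0 i, 3 => .x (X i 0)
  | .T0 i, 4 => .a (fmul3 i 1)
  | .T0 i, 5 => .x (X i 1)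
  | .T0 i, 6 => .a (fmul3 i 2)
  | .T0 i, 7 => .x (X i 2)
  | .T0 i, 8 => .w i
  | .T1 i, 0 => .x (X i 0)
  | .T1 i, 1 => .v (fmul4 i 1)
  | .T1 i, 2 => .x (X i 1)
  | .T2 i, 0 => .x (X i 0)
  | .T2 i, 1 => .v (fmul4 i 2)
  | .T2 i, 2 => .x (X i 2)
  | .T3 i, 0 => .x (X i 1)
  | .T3 i, 1 => .v (fmul4 i 3)
  | .T3 i, 2 => .x (X i 2)
  | g, _ => .u g

/-- The edge specification of a gadget of `U^{σ1}_φ`. -/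
def gspec (X : Fin m → Fin 3 → V) (g : GIdx m) : List (GEvent V m × Dir) :=
  g.shape.loc.zipIdx.map fun q => (interp X g q.1, g.shape.dir q.2)

/-- The number of a state of a gadget on its path. -/
def gval : (g : GIdx m) → GS m g → ℕ
  | .H _, s => Fin.val (n := 6) s
  | .F0, s => Fin.val (n := 9) s
  | .F1, s => Fin.val (n := 6) s
  | .F2, s => Fin.val (n := 10) s
  | .G _, s => Fin.val (n := 9) s
  | .D _, s => Fin.val (n := 9) s
  | .T0 _, s => Fin.val (n := 18) s
  | .T1 _, s => Fin.val (n := 5) s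
  | .T2 _, s => Fin.val (n := 5) s
  | .T3 _, s => Fin.val (n := 5) s

lemma gspec_getElem? (X : Fin m → Fin 3 → V) (g : GIdx m) (t : ℕ) :
    (gspec X g)[t]? = (g.shape.loc[t]?).map fun l => (interp X g l, g.shape.dir t) := by
  simp [gspec, List.getElem?_zipIdx, Function.comp_def]

lemma gval_injective (g : GIdx m) : Function.Injective (gval g) := by
  cases g <;> exact Fin.val_injective

lemma gval_le (g : GIdx m) (s : GS m g) : gval g s ≤ g.shape.loc.length := by
  cases g <;> exact Nat.le_of_lt_succ (Fin.isLt _)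

section chain
variable {E : Type} [DecidableEq E]

lemma echk_eq_true {o : Option (E × Dir)} {e : E} {b : Bool} :
    echk o e b = true ↔ ∃ d, o = some (e, d) ∧ (if b then d.allowsFwd else d.allowsBwd) = true := by
  rcases o with _ | ⟨e', d⟩
  · simp [echk]
  · simp only [echk, Bool.and_eq_true, decide_eq_true_eq, Option.some.injEq, Prod.mk.injEq]
    constructor
    · rintro ⟨rfl, h⟩; exact ⟨d, ⟨rfl, rfl⟩, h⟩
    · rintro ⟨d', ⟨rfl, rfl⟩, h⟩; exact ⟨rfl, h⟩

lemma chainTS_some {n : ℕ} {spec : List (E × Dir)} {s s' : Fin (n + 1)} {e : E}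
    (h : (chainTS n spec).delta s e = some s') :
    (∃ d, spec[s.val]? = some (e, d) ∧ d.allowsFwd = true ∧ s'.val = s.val + 1) ∨
    (∃ d, spec[s'.val]? = some (e, d) ∧ d.allowsBwd = true ∧ s.val = s'.val + 1) := by
  simp only [chainTS, chainDelta, Option.bind_eq_some_iff] at h
  obtain ⟨r, hr, hs⟩ := h
  split_ifs at hs
  cases hs
  split_ifs at hr with h1 h2 <;> cases hr
  · obtain ⟨d, hd, hd'⟩ := echk_eq_true.1 h1
    exact Or.inl ⟨d, hd, hd', rfl⟩
  · obtain ⟨d, hd, hd'⟩ := echk_eq_true.1 h2.2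
    exact Or.inr ⟨d, hd, hd', by simp only; omega⟩

lemma chainTS_none {n : ℕ} {spec : List (E × Dir)} (hl : spec.length ≤ n) {s : Fin (n + 1)} {e : E}
    (h : (chainTS n spec).delta s e = none) :
    (∀ d, spec[s.val]? = some (e, d) → d.allowsFwd = false) ∧
    (∀ t d, s.val = t + 1 → spec[t]? = some (e, d) → d.allowsBwd = false) := by
  simp only [chainTS, chainDelta, Option.bind_eq_none_iff] at h
  constructor
  · intro d hd
    by_contra hc
    have hlt := (List.getElem?_eq_some_iff.1 hd).1
    have := h (s.val + 1) (by rw [if_pos (echk_eq_true.2 ⟨d, hd, by simpa using hc⟩)])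
    rw [dif_pos (by omega)] at this
    cases this
  · intro t d ht hd
    by_contra hc
    have hlt := (List.getElem?_eq_some_iff.1 hd).1
    by_cases h1 : echk spec[s.val]? e true = true
    · obtain ⟨d', hd', -⟩ := echk_eq_true.1 h1
      have hlt := (List.getElem?_eq_some_iff.1 hd').1
      have := h (s.val + 1) (by rw [if_pos h1])
      rw [dif_pos (by omega)] at this
      cases this
    · have := h (s.val - 1) (by
        rw [if_neg h1, if_pos ⟨by omega, echk_eq_true.2 ⟨d, by simpa [ht] using hd,
          by simpa using hc⟩⟩])
      rw [dif_pos (by omega)] at this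
      cases this

lemma chainTS_fwd {n : ℕ} {spec : List (E × Dir)} {t : ℕ} {e : E} {d : Dir}
    (hd : spec[t]? = some (e, d)) (h : d.allowsFwd = true) (ht : t + 1 < n + 1) :
    (chainTS n spec).delta ⟨t, by omega⟩ e = some ⟨t + 1, ht⟩ := by
  simp only [chainTS, chainDelta]
  rw [if_pos (echk_eq_true.2 ⟨d, hd, by simpa using h⟩)]
  simp only [Option.bind_some]
  rw [dif_pos ht]

lemma chainTS_bwd {n : ℕ} {spec : List (E × Dir)} {t : ℕ} {e : E} {d : Dir}
    (hd : spec[t]? = some (e, d)) (h : d.allowsBwd = true) (ht : t + 1 < n + 1)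
    (hn : ∀ d', spec[t + 1]? = some (e, d') → d'.allowsFwd = false) :
    (chainTS n spec).delta ⟨t + 1, ht⟩ e = some ⟨t, by omega⟩ := by
  simp only [chainTS, chainDelta]
  rw [if_neg, if_pos ⟨by omega, echk_eq_true.2 ⟨d, by simpa using hd, by simpa using h⟩⟩]
  · simp only [Option.bind_some, Nat.add_sub_cancel]
    rw [dif_pos (by omega)]
  · intro hc
    obtain ⟨d', hd', h'⟩ := echk_eq_true.1 hc
    simp [hn d' hd'] at h'

end chain

variable {X : Fin m → Fin 3 → V}

/-- Distinct labels of a gadget denote distinct events, as the variables of a clause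
are distinct. -/
lemma interp_injective (hX : ∀ i, Function.Injective (X i)) (g : GIdx m) {a b : ℕ}
    (ha : a ∈ g.shape.loc) (hb : b ∈ g.shape.loc) (h : interp X g a = interp X g b) : a = b := by
  have h01 : ∀ i, X i 0 ≠ X i 1 := fun i e => absurd (hX i e) (by decide)
  have h02 : ∀ i, X i 0 ≠ X i 2 := fun i e => absurd (hX i e) (by decide)
  have h12 : ∀ i, X i 1 ≠ X i 2 := fun i e => absurd (hX i e) (by decide)
  have hnd : (g.shape.loc.dedup.map (interp X g)).Nodup := by
    cases g <;> simp [GIdx.shape, Shape.loc, interp, fmul3, h01, h02, h12,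
      List.dedup_cons_of_notMem]
  exact List.inj_on_of_nodup_map hnd (List.mem_dedup.2 ha) (List.mem_dedup.2 hb) h

variable [DecidableEq V]

lemma gadget_some {g : GIdx m} {s s' : GS m g} {e : GEvent V m}
    (h : (gadget m X false g).delta s e = some s') :
    (∃ d, (gspec X g)[gval g s]? = some (e, d) ∧ d.allowsFwd = true ∧
      gval g s' = gval g s + 1) ∨
    (∃ d, (gspec X g)[gval g s']? = some (e, d) ∧ d.allowsBwd = true ∧
      gval g s = gval g s' + 1) := by
  cases g <;> exact chainTS_some h

lemma gadget_none' {g : GIdx m} {s : GS m g} {e : GEvent V m}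
    (h : (gadget m X false g).delta s e = none) :
    (∀ d, (gspec X g)[gval g s]? = some (e, d) → d.allowsFwd = false) ∧
    (∀ t d, gval g s = t + 1 → (gspec X g)[t]? = some (e, d) → d.allowsBwd = false) := by
  cases g <;> refine chainTS_none (le_of_eq ?_) h <;> rfl

end paths

section regions
variable {V : Type} {m : ℕ} {X : Fin m → Fin 3 → V}

/-! ### Regions of the gadget union -/

/-- Compatibility of an interaction with an edge whose ends have support values `a` and `b`. -/
def EdgeOK (i : Interaction) (d : Dir) (a b : Bool) : Prop :=
  (d.allowsFwd = true → i.apply a = some b) ∧ (d.allowsBwd = true → i.apply b = some a)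

instance (i : Interaction) (d : Dir) (a b : Bool) : Decidable (EdgeOK i d a b) := by
  unfold EdgeOK; infer_instance

lemma edgeOK_nop (d : Dir) (a : Bool) : EdgeOK .nop d a a := by
  cases d <;> simp [EdgeOK, Interaction.apply]

lemma edgeOK_swap (d : Dir) (a : Bool) : EdgeOK .swap d a (!a) := by
  cases d <;> simp [EdgeOK, Interaction.apply]

lemma edgeOK_free (d : Dir) : EdgeOK .free d false false := by
  cases d <;> simp [EdgeOK, Interaction.apply]

lemma edgeOK_set (d : Dir) : EdgeOK .set d true true := by
  cases d <;> simp [EdgeOK, Interaction.apply]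

/-- A `tau1`-region of the gadget union, with states given by their numbers on the paths. -/
structure LReg (X : Fin m → Fin 3 → V) where
  sup : GIdx m → ℕ → Bool
  sig : GEvent V m → Interaction
  mem : ∀ e, sig e ∈ tau1
  ok : ∀ (g : GIdx m) (t l : ℕ), g.shape.loc[t]? = some l →
    EdgeOK (sig (interp X g l)) (g.shape.dir t) (sup g t) (sup g (t + 1))

/-- The region of the gadget union described by numbered states. -/
def LReg.toU [DecidableEq V] (R : LReg X) : URegion tau1 (gadget m X false) where
  sup s := R.sup s.1 (gval s.1 s.2)
  sig := R.sig
  sig_mem := R.mem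
  consistent g s e s' h := by
    rcases gadget_some h with ⟨d, hd, hf, hs⟩ | ⟨d, hd, hf, hs⟩ <;>
      simp only [gspec_getElem?, Option.map_eq_some_iff, Prod.mk.injEq] at hd <;>
      obtain ⟨l, hl, rfl, rfl⟩ := hd
    · simpa [hs] using (R.ok g _ l hl).1 hf
    · simpa [hs] using (R.ok g _ l hl).2 hf

/-- An event not occurring on `g` is inhibited by the support that is `1` on `g` and `0`
elsewhere. -/
lemma inhibit_absent (g : GIdx m) (e : GEvent V m) (he : ∀ l ∈ g.shape.loc, interp X g l ≠ e)
    (s : ℕ) : ∃ R : LReg X, R.sig e = .free ∧ R.sup g s = true := by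
  classical
  refine ⟨⟨fun g' _ => decide (g' = g), fun e' => if e' = e then .free else .nop, ?_, ?_⟩, ?_, ?_⟩
  · intro e'
    split_ifs <;> simp [tau1]
  · intro g' t l hl
    split_ifs with h
    · have : g' ≠ g := by
        rintro rfl; exact he l (List.mem_of_getElem? hl) h
      simpa [this] using edgeOK_free _
    · exact edgeOK_nop _ _
  · simp
  · simp

/-! ### Parity regions -/

/-- The parity of the number of labels satisfying `P` among the first `t` labels of a list. -/
def parL (P : ℕ → Bool) (l : List ℕ) : ℕ → Bool
  | 0 => false
  | t + 1 => xor (parL P l t) (match l[t]? with | some a => P a | none => false)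

lemma parL_congr {P Q : ℕ → Bool} {l : List ℕ} (h : ∀ a ∈ l, P a = Q a) (t : ℕ) :
    parL P l t = parL Q l t := by
  induction t with
  | zero => rfl
  | succ t ih =>
    simp only [parL, ih]
    cases hl : l[t]? with
    | none => rfl
    | some a => simp only [h a (List.mem_of_getElem? hl)]

/-- The parity of the events in `F` on the first `t` edges of gadget `g`. -/
def par (X : Fin m → Fin 3 → V) (F : GEvent V m → Bool) (g : GIdx m) (t : ℕ) : Bool :=
  parL (fun l => F (interp X g l)) g.shape.loc t

/-- The region in which the events in `F` are `swap`, those in `Fr` are `free`, and all others are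
`nop`; on every path the value of the first state may be chosen. -/
def parReg (X : Fin m → Fin 3 → V) (F Fr : GEvent V m → Bool) (start : GIdx m → Bool)
    (h : ∀ g t l, g.shape.loc[t]? = some l → Fr (interp X g l) = true →
      F (interp X g l) = false ∧ start g = par X F g t) : LReg X where
  sup g t := xor (start g) (par X F g t)
  sig e := if Fr e then .free else if F e then .swap else .nop
  mem e := by split_ifs <;> simp [tau1]
  ok g t l hl := by
    have hs : par X F g (t + 1) = xor (par X F g t) (F (interp X g l)) := by
      simp [par, parL, hl]
    simp only [hs]
    split_ifs with h1 h2
    · obtain ⟨h3, h4⟩ := h g t l hl h1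
      rw [h3, h4]; simpa using edgeOK_free _
    · rw [h2]; simpa using edgeOK_swap _ _
    · simp only [Bool.not_eq_true] at h2
      rw [h2]; simpa using edgeOK_nop _ _

/-- On every path, all edges labelled `e` have the same parity of preceding `F`-labelled edges. -/
def Compat (X : Fin m → Fin 3 → V) (e : GEvent V m) (F : GEvent V m → Bool) : Prop :=
  ∀ (g : GIdx m) (t u l a : ℕ), g.shape.loc[t]? = some l → g.shape.loc[u]? = some a →
    interp X g l = e → interp X g a = e → par X F g t = par X F g u

/-- If `F` is compatible with `e`, then `e` can be free while the events in `F` are `swap`: choose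
the value of the first state of every path such that the ends of the `e`-edges get `0`. -/
lemma inhibit_parity {e : GEvent V m} {F : GEvent V m → Bool} (hF : F e = false)
    (hc : Compat X e F) {g : GIdx m} {t l : ℕ} (hl : g.shape.loc[t]? = some l)
    (he : interp X g l = e) {s : ℕ} (hs : par X F g s ≠ par X F g t) :
    ∃ R : LReg X, R.sig e = .free ∧ R.sup g s = true := by
  classical
  let start : GIdx m → Bool := fun g =>
    decide (∃ t l, g.shape.loc[t]? = some l ∧ interp X g l = e ∧ par X F g t = true)
  have hst : ∀ (g : GIdx m) (t l : ℕ), g.shape.loc[t]? = some l → interp X g l = e →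
      start g = par X F g t := by
    intro g t l hl he
    simp only [start]
    cases hp : par X F g t
    · rw [decide_eq_false_iff_not]
      rintro ⟨t', l', hl', he', hp'⟩
      rw [hc g t t' l l' hl hl' he he', hp'] at hp
      cases hp
    · exact decide_eq_true ⟨t, l, hl, he, hp⟩
  refine ⟨parReg X F (fun e' => decide (e' = e)) start ?_, ?_, ?_⟩
  · intro g t l hl he
    have he := of_decide_eq_true he
    exact ⟨by rw [he, hF], hst g t l hl he⟩
  · simp [parReg]
  · simp only [parReg, hst g t l hl he]
    revert hs
    cases par X F g s <;> cases par X F g t <;> simp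

/-- The pairs of a shape's labels such that making the second one `swap` can be incompatible with
making the first one `free`. -/
def badLoc : Shape → ℕ → ℕ → Bool
  | .H, a, b => a == 1 && b == 0 || a == 0 && (b == 1 || b == 2)
  | .F0, a, b => a == 1 && (b == 0 || b == 2) || a == 0 && (b == 1 || b == 2 || b == 3)
  | .F1, a, b => a == 0 && (b == 1 || b == 2)
  | .F2, a, b => a == 3 && b == 4 || a == 0 && b != 0 && decide (b < 6)
  | .G, a, b => a == 0 && (b == 2 || b == 3)
  | .T0, a, b => a == 0 && b != 0 && decide (b < 9)
  | .T1, _, _ => false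

/-- The global counterpart of `badLoc`. -/
def bad : GEvent V m → GEvent V m → Bool
  | .k, .k => false
  | .k, .u _ => false
  | .k, .y _ => false
  | .k, .p _ => false
  | .k, _ => true
  | .mev, .k => true
  | .mev, .q i => i == 0
  | .z, .q i => i == 1
  | _, _ => false

lemma badLoc_eq (g : GIdx m) {a b : ℕ} (ha : a ∈ g.shape.loc) (hb : b ∈ g.shape.loc) :
    badLoc g.shape a b = bad (interp X g a) (interp X g b) := by
  have h : (g.shape.loc.all fun a => g.shape.loc.all fun b =>
      badLoc g.shape a b == bad (interp X g a) (interp X g b)) = true := by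
    cases g <;> rfl
  simp only [List.all_eq_true, beq_iff_eq] at h
  exact h a ha b hb

/-- If making `b` swap is not bad for a label, every two occurrences of this label are separated by
an even number of occurrences of `b`. -/
lemma loc_compat (sh : Shape) : ∀ b ∈ sh.loc, ∀ t < sh.loc.length, ∀ t' < sh.loc.length,
    sh.loc[t]? = sh.loc[t']? → sh.loc[t]? ≠ some b →
    (∀ a ∈ sh.loc[t]?, badLoc sh a b = false) →
    parL (fun l => l == b) sh.loc t = parL (fun l => l == b) sh.loc t' := by
  cases sh <;> decide +kernel

lemma par_single [DecidableEq V] (hX : ∀ i, Function.Injective (X i)) (g : GIdx m) {b : ℕ}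
    (hb : b ∈ g.shape.loc) (t : ℕ) :
    par X (fun f => f = interp X g b) g t = parL (fun l => l == b) g.shape.loc t := by
  refine parL_congr (fun a ha => ?_) t
  rw [Bool.eq_iff_iff]
  simp only [decide_eq_true_eq, beq_iff_eq]
  exact ⟨interp_injective hX g ha hb, congrArg _⟩

lemma parL_false {l : List ℕ} (t : ℕ) : parL (fun _ => false) l t = false := by
  induction t with
  | zero => rfl
  | succ t ih => simp only [parL, ih]; cases l[t]? <;> rfl

lemma compat_single [DecidableEq V] (hX : ∀ i, Function.Injective (X i)) {e f : GEvent V m}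
    (hne : e ≠ f) (hb : bad e f = false) : Compat X e (fun f' => f' = f) := by
  intro g t t' l l' hl hl' he he'
  by_cases hf : ∃ b ∈ g.shape.loc, interp X g b = f
  · obtain ⟨b, hbm, rfl⟩ := hf
    rw [par_single hX g hbm, par_single hX g hbm]
    subst he
    have hll := interp_injective hX g (List.mem_of_getElem? hl) (List.mem_of_getElem? hl') he'.symm
    subst hll
    refine loc_compat _ b hbm t (List.getElem?_eq_some_iff.1 hl).1 t'
      (List.getElem?_eq_some_iff.1 hl').1 (hl.trans hl'.symm) ?_ ?_
    · rw [hl]; rintro ⟨⟩; exact hne rfl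
    · intro a ha
      rw [hl] at ha
      cases ha
      rw [badLoc_eq g (List.mem_of_getElem? hl) hbm]
      exact hb
  · have : ∀ t, par X (fun f' => decide (f' = f)) g t = false := by
      intro t
      rw [← parL_false (l := g.shape.loc) t]
      exact parL_congr (fun a ha => decide_eq_false fun h => hf ⟨a, ha, h⟩) t
    rw [this, this]

end regions

section
variable {V : Type} {m : ℕ} {X : Fin m → Fin 3 → V}

/-! ### Special regions of the gadget union -/

lemma fmul3_inj {i i' : Fin m} {r r' : Fin 3} : fmul3 i r = fmul3 i' r' ↔ i = i' ∧ r = r' := by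
  simp only [fmul3, Fin.ext_iff]; omega

lemma fmul4_inj {i i' : Fin m} {r r' : Fin 4} : fmul4 i r = fmul4 i' r' ↔ i = i' ∧ r = r' := by
  simp only [fmul4, Fin.ext_iff]; omega

lemma fmul3_mod (i : Fin m) (r : Fin 3) : (fmul3 i r).val % 3 = r.val := by
  simp only [fmul3]; omega

@[simp] lemma gspec_H (j : Fin (4 * m)) : gspec X (.H j) =
    [(.k, .both), (.mev, .both), (.v j, .both), (.k, .both), (.u (.H j), .both)] := rfl

@[simp] lemma gspec_F0 : gspec X .F0 =
    [(.k, .both), (.mev, .both), (.q 0, .both), (.k, .both), (.mev, .both), (.q 1, .both),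
      (.k, .both), (.u .F0, .both)] := rfl

@[simp] lemma gspec_F1 : gspec X .F1 =
    [(.k, .both), (.q 2, .both), (.q 3, .both), (.k, .both), (.u .F1, .both)] := rfl

@[simp] lemma gspec_F2 : gspec X .F2 =
    [(.k, .both), (.q 2, .both), (.q 0, .both), (.z, .both), (.q 1, .both), (.z, .both),
      (.q 3, .both), (.k, .both), (.u .F2, .both)] := rfl

@[simp] lemma gspec_G (j : Fin m) : gspec X (.G j) =
    [(.k, .both), (.y j, .both), (.z, .fwd), (.z, .both), (.y j, .both), (.w j, .both),
      (.k, .both), (.u (.G j), .both)] := rfl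

@[simp] lemma gspec_D (l : Fin (3 * m)) : gspec X (.D l) =
    [(.k, .both), (.p l, .both), (.z, .fwd), (.z, .both), (.p l, .both), (.a l, .both),
      (.k, .both), (.u (.D l), .both)] := rfl

@[simp] lemma gspec_T0 (i : Fin m) : gspec X (.T0 i) =
    [(.k, .both), (.v (fmul4 i 0), .both), (.a (fmul3 i 0), .both), (.x (X i 0), .both),
      (.x (X i 0), .bwd), (.a (fmul3 i 0), .both), (.a (fmul3 i 1), .both), (.x (X i 1), .both),
      (.x (X i 1), .bwd), (.a (fmul3 i 1), .both), (.a (fmul3 i 2), .both), (.x (X i 2), .both),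
      (.x (X i 2), .bwd), (.a (fmul3 i 2), .both), (.w i, .both), (.k, .both),
      (.u (.T0 i), .both)] := rfl

@[simp] lemma gspec_T1 (i : Fin m) : gspec X (.T1 i) =
    [(.x (X i 0), .both), (.v (fmul4 i 1), .both), (.x (X i 1), .both),
      (.u (.T1 i), .both)] := rfl

@[simp] lemma gspec_T2 (i : Fin m) : gspec X (.T2 i) =
    [(.x (X i 0), .both), (.v (fmul4 i 2), .both), (.x (X i 2), .both),
      (.u (.T2 i), .both)] := rfl

@[simp] lemma gspec_T3 (i : Fin m) : gspec X (.T3 i) =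
    [(.x (X i 1), .both), (.v (fmul4 i 3), .both), (.x (X i 2), .both),
      (.u (.T3 i), .both)] := rfl

/-- The region conditions along a path whose first state has number `t`. -/
def ChainOK (sig : GEvent V m → Interaction) (sup : ℕ → Bool) :
    ℕ → List (GEvent V m × Dir) → Prop
  | _, [] => True
  | t, q :: l => EdgeOK (sig q.1) q.2 (sup t) (sup (t + 1)) ∧ ChainOK sig sup (t + 1) l

lemma chainOK_getElem {sig : GEvent V m → Interaction} {sup : ℕ → Bool}
    {l : List (GEvent V m × Dir)} {t₀ : ℕ} (h : ChainOK sig sup t₀ l) {t : ℕ}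
    {q : GEvent V m × Dir} (hq : l[t]? = some q) :
    EdgeOK (sig q.1) q.2 (sup (t₀ + t)) (sup (t₀ + t + 1)) := by
  induction l generalizing t t₀ with
  | nil => simp at hq
  | cons q' l ih =>
    cases t with
    | zero => simp only [List.getElem?_cons_zero, Option.some.injEq] at hq; subst hq; exact h.1
    | succ t =>
      rw [← Nat.succ_add_eq_add_succ]
      exact ih h.2 (by simpa using hq)

lemma edges_ok {sup : GIdx m → ℕ → Bool} {sig : GEvent V m → Interaction}
    (h : ∀ g : GIdx m, ChainOK sig (sup g) 0 (gspec X g))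
    (g : GIdx m) (t l : ℕ) (hl : g.shape.loc[t]? = some l) :
    EdgeOK (sig (interp X g l)) (g.shape.dir t) (sup g t) (sup g (t + 1)) := by
  simpa using chainOK_getElem (h g) (t := t) (q := (interp X g l, g.shape.dir t))
    (by simp [gspec_getElem?, hl])

@[simp] lemma edgeOK_both {i : Interaction} {a b : Bool} :
    EdgeOK i .both a b ↔ i.apply a = some b ∧ i.apply b = some a := by
  simp [EdgeOK, Dir.allowsFwd, Dir.allowsBwd]

@[simp] lemma edgeOK_fwd {i : Interaction} {a b : Bool} :
    EdgeOK i .fwd a b ↔ i.apply a = some b := by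
  simp [EdgeOK, Dir.allowsFwd, Dir.allowsBwd]

@[simp] lemma edgeOK_bwd {i : Interaction} {a b : Bool} :
    EdgeOK i .bwd a b ↔ i.apply b = some a := by
  simp [EdgeOK, Dir.allowsFwd, Dir.allowsBwd]

/-- The region with `k` free that comes from a one-in-three model; `r i` is the position of the
variable of clause `i` in the model. -/
lemma modelRegion {M : Set V} {r : Fin m → Fin 3} (hr : ∀ i j, X i j ∈ M ↔ j = r i) :
    ∃ R : LReg X, R.sig .k = .free ∧ (∀ j, R.sup (.H j) 2 = true) ∧
      R.sup .F0 2 = true ∧ R.sup .F0 5 = true ∧ ∀ i, R.sup (.T0 i) 2 = true := by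
  classical
  let sup : GIdx m → ℕ → Bool := fun g t => match g with
    | .H _ => t == 2
    | .F0 => t == 2 || t == 5
    | .F2 => t == 3 || t == 4
    | .T0 i => decide (2 ≤ t ∧ t ≤ 4 + 4 * (r i).val)
    | .T1 i => if r i = 0 then decide (t ≤ 1) else decide (2 ≤ t)
    | .T2 i => if r i = 0 then decide (t ≤ 1) else decide (2 ≤ t)
    | .T3 i => if r i = 1 then decide (t ≤ 1) else decide (2 ≤ t)
    | _ => false
  let sig : GEvent V m → Interaction
    | .k => .free
    | .mev => .swap
    | .v _ => .swap
    | .q i => if i = 0 ∨ i = 1 then .swap else .nop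
    | .x vv => if vv ∈ M then .set else .nop
    | _ => .nop
  refine ⟨⟨sup, sig, ?_, edges_ok ?_⟩, ?_⟩
  · intro e
    cases e <;> simp only [sig] <;> (try split_ifs) <;> simp [tau1]
  · intro g
    cases g with
    | T0 i =>
      obtain h | h | h : r i = 0 ∨ r i = 1 ∨ r i = 2 := by omega
      all_goals
        simp [sup, sig, hr, h, ChainOK, Interaction.apply]
    | T1 i | T2 i | T3 i =>
      obtain h | h | h : r i = 0 ∨ r i = 1 ∨ r i = 2 := by omega
      all_goals
        simp [sup, sig, hr, h, ChainOK, Interaction.apply]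
    | _ =>
        simp [sup, sig, ChainOK, Interaction.apply]
  · exact ⟨rfl, fun _ => rfl, rfl, rfl, fun i => decide_eq_true ⟨le_rfl, by omega⟩⟩

/-- Regions with `k` free that exist without a model: here `w_i` changes the support, and so do
`a_{3i}` and, if `b` holds, all `a_l`. -/
lemma freeRegion (X : Fin m → Fin 3 → V) (b : Bool) :
    ∃ R : LReg X, R.sig .k = .free ∧ (∀ j, R.sup (.G j) 5 = true) ∧
      (∀ l, b = true → R.sup (.D l) 5 = true) ∧
      ∀ i t, R.sup (.T0 i) t = if b then decide (t ∈ [3, 4, 5, 7, 8, 9, 11, 12, 14])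
        else decide (3 ≤ t ∧ t ≤ 14 ∧ t ≠ 5) := by
  let sw : Fin (3 * m) → Bool := fun l => b || l.val % 3 == 0
  let sup : GIdx m → ℕ → Bool := fun g t => match g with
    | .H _ => false
    | .F0 => false
    | .F1 => t == 2
    | .F2 => decide (2 ≤ t ∧ t ≤ 6)
    | .G _ => decide (3 ≤ t ∧ t ≤ 5)
    | .D l => if sw l then decide (3 ≤ t ∧ t ≤ 5) else decide (2 ≤ t ∧ t ≤ 4)
    | .T0 _ => if b then decide (t ∈ [3, 4, 5, 7, 8, 9, 11, 12, 14])
        else decide (3 ≤ t ∧ t ≤ 14 ∧ t ≠ 5)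
    | _ => true
  let sig : GEvent V m → Interaction
    | .k => .free
    | .q i => if i = 2 ∨ i = 3 then .swap else .nop
    | .z => .set
    | .w _ => .swap
    | .a l => if sw l then .swap else .nop
    | .p l => if sw l then .nop else .swap
    | .x _ => .set
    | _ => .nop
  refine ⟨⟨sup, sig, ?_, edges_ok ?_⟩, ?_⟩
  · intro e
    cases e <;> simp only [sig] <;> (try split_ifs) <;> simp [tau1]
  · intro g
    cases g with
    | D l =>
      cases h : sw l <;>
        simp [sup, sig, h, ChainOK, Interaction.apply]
    | T0 i =>
      cases b <;>
        simp [sup, sig, sw, fmul3_mod, ChainOK, Interaction.apply]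
    | _ =>
        simp [sup, sig, ChainOK, Interaction.apply]
  · refine ⟨rfl, fun _ => rfl, ?_, fun _ _ => rfl⟩
    rintro l rfl
    simp [sup, sw]

variable [DecidableEq V]

/-- The support drops along `T_{i,0}` behind the middle of the two `X_{i,r}`-edges; the event `e`
occurs on `T_{i,0}` only behind it. -/
lemma dropRegion (hX : ∀ i, Function.Injective (X i)) (i : Fin m) (r : Fin 3) (e : GEvent V m)
    (he : e = .w i ∨ ∃ r', r < r' ∧ e = .a (fmul3 i r')) :
    ∃ R : LReg X, R.sig e = .free ∧ ∀ t, R.sup (.T0 i) t = decide (t ≤ 4 + 4 * r.val) := by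
  let sup : GIdx m → ℕ → Bool := fun g t => match g with
    | .G _ => false
    | .D _ => false
    | .T0 i' => if i' = i then decide (t ≤ 4 + 4 * r.val) else true
    | _ => true
  let sig : GEvent V m → Interaction := fun e' =>
    if e' = e then .free else if e' = .x (X i r) then .set else .nop
  refine ⟨⟨sup, sig, ?_, edges_ok ?_⟩, ?_, ?_⟩
  · intro e'
    simp only [sig]; split_ifs <;> simp [tau1]
  · intro g
    cases g with
    | T0 i' =>
      by_cases hi : i' = i
      · subst hi
        rcases he with rfl | ⟨r', hr, rfl⟩
        · obtain rfl | rfl | rfl : r = 0 ∨ r = 1 ∨ r = 2 := by omega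
          all_goals
            simp [sup, sig, (hX _).eq_iff, ChainOK, Interaction.apply]
        · obtain ⟨rfl, rfl⟩ | ⟨rfl, rfl⟩ | ⟨rfl, rfl⟩ :
            r = 0 ∧ r' = 1 ∨ r = 0 ∧ r' = 2 ∨ r = 1 ∧ r' = 2 := by omega
          all_goals
            simp [sup, sig, (hX _).eq_iff, ChainOK,
              fmul3_inj, Interaction.apply]
      · rcases he with rfl | ⟨r', hr, rfl⟩ <;>
          simp [sup, sig, ChainOK, hi, fmul3_inj] <;>
          and_intros <;> (try split_ifs) <;> rfl
    | _ =>
      rcases he with rfl | ⟨r', hr, rfl⟩ <;>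
          simp [sup, sig, ChainOK, fmul3_inj] <;>
          and_intros <;> (try split_ifs) <;> rfl
  · simp [sig]
  · simp [sup]

/-- The support rises along `T_{i,0}` at the two `a_{3i+r}`-edges; on this path the event `e`
occurs only in front of them. -/
lemma riseRegion (hX : ∀ i, Function.Injective (X i)) (i : Fin m) (r : Fin 3) (e : GEvent V m)
    (he : e = .v (fmul4 i 0) ∨ ∃ r', r' < r ∧ e = .a (fmul3 i r')) :
    ∃ R : LReg X, R.sig e = .free ∧ ∀ t, R.sup (.T0 i) t =
      decide (t = 3 + 4 * r.val ∨ t = 4 + 4 * r.val ∨ 6 + 4 * r.val ≤ t) := by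
  let sup : GIdx m → ℕ → Bool := fun g t => match g with
    | .H _ => false
    | .D l => decide (l = fmul3 i r ∧ 6 ≤ t)
    | .T0 i' => if i' = i then
        decide (t = 3 + 4 * r.val ∨ t = 4 + 4 * r.val ∨ 6 + 4 * r.val ≤ t) else true
    | _ => true
  let sig : GEvent V m → Interaction := fun e' =>
    if e' = e then .free else if e' = .x (X i r) then .set
    else if e' = .a (fmul3 i r) then .swap else .nop
  refine ⟨⟨sup, sig, ?_, edges_ok ?_⟩, ?_, ?_⟩
  · intro e'
    simp only [sig]; split_ifs <;> simp [tau1]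
  · intro g
    cases g with
    | T0 i' =>
      by_cases hi : i' = i
      · subst hi
        rcases he with rfl | ⟨r', hr, rfl⟩
        · obtain rfl | rfl | rfl : r = 0 ∨ r = 1 ∨ r = 2 := by omega
          all_goals
            simp [sup, sig, (hX _).eq_iff, ChainOK,
              fmul3_inj, Interaction.apply]
        · obtain ⟨rfl, rfl⟩ | ⟨rfl, rfl⟩ | ⟨rfl, rfl⟩ :
            r' = 0 ∧ r = 1 ∨ r' = 0 ∧ r = 2 ∨ r' = 1 ∧ r = 2 := by omega
          all_goals
            simp [sup, sig, (hX _).eq_iff, ChainOK,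
              fmul3_inj, Interaction.apply]
      · rcases he with rfl | ⟨r', hr, rfl⟩ <;>
          simp [sup, sig, ChainOK, hi, fmul3_inj,
            fmul4_inj] <;>
          and_intros <;> (try split_ifs) <;> rfl
    | D l =>
      rcases he with rfl | ⟨r', hr, rfl⟩
      · by_cases hl : l = fmul3 i r <;>
          simp [sup, sig, ChainOK, hl, Interaction.apply]
      · by_cases hl : l = fmul3 i r
        · simp [sup, sig, ChainOK, hl, fmul3_inj, hr.ne', Interaction.apply]
        · simp [sup, sig, ChainOK, hl, Interaction.apply]
          split_ifs <;> rfl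
    | _ =>
      rcases he with rfl | ⟨r', hr, rfl⟩ <;>
          simp [sup, sig, ChainOK, fmul4_inj] <;>
          and_intros <;> (try split_ifs) <;> rfl
  · simp [sig]
  · simp [sup]

/-- The support `1, 1, 0, 1, 1, 0, 0, 0, 0` on a gadget of shape `G`, where `e` is its `w`- or
`a`-event and `f` is its `y`- or `p`-event. -/
lemma zRegion (X : Fin m → Fin 3 → V) (g : GIdx m) (e f : GEvent V m)
    (h : (∃ j, g = .G j ∧ e = .w j ∧ f = .y j) ∨ ∃ l, g = .D l ∧ e = .a l ∧ f = .p l) :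
    ∃ R : LReg X, R.sig e = .free ∧ ∀ t, R.sup g t = decide (t ∈ [0, 1, 3, 4]) := by
  let sup : GIdx m → ℕ → Bool := fun g' t => match g' with
    | .T0 _ => false
    | _ => if g' = g then decide (t ∈ [0, 1, 3, 4]) else true
  let sig : GEvent V m → Interaction := fun e' =>
    if e' = e then .free else if e' = .z then .set else if e' = f then .swap else .nop
  refine ⟨⟨sup, sig, ?_, edges_ok ?_⟩, ?_, ?_⟩
  · intro e'
    simp only [sig]; split_ifs <;> simp [tau1]
  · intro g'
    by_cases hg : g' = g
    · subst hg
      rcases h with ⟨j, rfl, rfl, rfl⟩ | ⟨j, rfl, rfl, rfl⟩ <;>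
        simp [sup, sig, ChainOK,
          Interaction.apply]
    · rcases h with ⟨j, rfl, rfl, rfl⟩ | ⟨j, rfl, rfl, rfl⟩ <;> cases g' <;> simp at hg <;>
        simp [sup, sig, ChainOK, hg,
          Interaction.apply]
      all_goals and_intros <;> split_ifs <;> rfl
  · simp [sig]
  · intro t
    rcases h with ⟨j, rfl, rfl, rfl⟩ | ⟨j, rfl, rfl, rfl⟩ <;> simp [sup]

end

section
variable {V : Type} {m : ℕ} {X : Fin m → Fin 3 → V} [DecidableEq V]

/-! ### Event-state separation of the gadget union -/

/-- One-way edges are next to a two-way edge with the same label, which makes the label occur at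
both of their ends. -/
lemma dir_fwd_false (sh : Shape) : ∀ t < sh.loc.length, (sh.dir t).allowsFwd = false →
    0 < t ∧ sh.loc[t - 1]? = sh.loc[t]? ∧ (sh.dir (t - 1)).allowsBwd = true := by
  cases sh <;> decide +kernel

lemma dir_bwd_false (sh : Shape) : ∀ t < sh.loc.length, (sh.dir t).allowsBwd = false →
    sh.loc[t + 1]? = sh.loc[t]? ∧ (sh.dir (t + 1)).allowsFwd = true := by
  cases sh <;> decide +kernel

/-- An event that does not occur at a state labels none of the edges at this state. -/
lemma not_label {g : GIdx m} {s : GS m g} {e : GEvent V m}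
    (h : (gadget m X false g).delta s e = none) :
    (∀ l, g.shape.loc[gval g s]? = some l → interp X g l ≠ e) ∧
    (∀ t l, gval g s = t + 1 → g.shape.loc[t]? = some l → interp X g l ≠ e) := by
  obtain ⟨h1, h2⟩ := gadget_none' h
  simp only [gspec_getElem?, Option.map_eq_some_iff, Prod.mk.injEq] at h1 h2
  constructor
  · rintro l hl rfl
    have hlt := (List.getElem?_eq_some_iff.1 hl).1
    obtain ⟨h3, h4, h5⟩ := dir_fwd_false _ _ hlt (h1 _ ⟨l, hl, rfl, rfl⟩)
    rw [h2 (gval g s - 1) _ (by omega) ⟨l, h4.trans hl, rfl, rfl⟩] at h5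
    cases h5
  · rintro t l ht hl rfl
    have hlt := (List.getElem?_eq_some_iff.1 hl).1
    obtain ⟨h4, h5⟩ := dir_bwd_false _ _ hlt (h2 _ _ ht ⟨l, hl, rfl, rfl⟩)
    rw [ht] at h1
    rw [h1 _ ⟨l, h4.trans hl, rfl, rfl⟩] at h5
    cases h5

/-- The pairs of a label `l` and a state `s` for which inhibiting `l` at `s` takes more than a
region with `l` free, one `swap`-event, and otherwise only `nop`-events; see `exists_parity`. -/
def exceptions : Shape → List (ℕ × ℕ)
  | .H => [(0, 2), (1, 0)]
  | .F0 => [(0, 2), (0, 5), (1, 0), (1, 3)]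
  | .F1 => [(0, 2)]
  | .F2 => [(0, 2), (0, 3), (0, 4), (0, 5), (0, 6)]
  | .G => [(0, 5), (3, 1)]
  | .T0 => (List.range 13).map (fun s => (0, s + 2)) ++
      [(1, 6), (1, 10), (1, 14), (8, 2), (8, 6), (8, 10), (2, 10), (2, 14), (4, 2), (4, 14),
        (6, 2), (6, 6)]
  | .T1 => []

lemma exists_parity (sh : Shape) : ∀ q ∈ sh.loc.zipIdx, ∀ s < sh.loc.length + 1,
    sh.loc[s]? ≠ some q.1 → (s = 0 ∨ sh.loc[s - 1]? ≠ some q.1) →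
    (∃ b ∈ sh.loc, q.1 ≠ b ∧ badLoc sh q.1 b = false ∧
      parL (fun l => l == b) sh.loc s ≠ parL (fun l => l == b) sh.loc q.2) ∨
    (q.1, s) ∈ exceptions sh := by
  cases sh <;> decide +kernel

/-- The parity region of `F` with the same initial value on all paths. -/
lemma parity_region (F : GEvent V m → Bool) (e : GEvent V m) (b : Bool) (hF : F e = false)
    (h : ∀ g : GIdx m, (g.shape.loc.zipIdx.all fun q =>
      decide (interp X g q.1 ≠ e) || (b == par X F g q.2)) = true) :
    ∃ R : LReg X, R.sig e = .free ∧ ∀ g t, R.sup g t = xor b (par X F g t) := by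
  refine ⟨parReg X F (fun e' => decide (e' = e)) (fun _ => b) ?_, ?_, fun _ _ => rfl⟩
  · intro g t l hl he
    have he := of_decide_eq_true he
    have h := List.all_eq_true.1 (h g) (l, t) (List.mem_zipIdx_iff_getElem?.2 hl)
    simp only [he, ne_eq, not_true, decide_false, Bool.false_or, beq_iff_eq] at h
    exact ⟨by rw [he, hF], h⟩
  · simp [parReg]

/-- `k` is inhibited inside `F_1` and `F_2` by making `q_2` and `q_3` swap. -/
lemma q_region (X : Fin m → Fin 3 → V) : ∃ R : LReg X, R.sig .k = .free ∧ R.sup .F1 2 = true ∧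
    ∀ s, 2 ≤ s → s ≤ 6 → R.sup .F2 s = true := by
  obtain ⟨R, h1, h2⟩ := parity_region (X := X)
    (fun e => match e with | .q i => decide (2 ≤ i.val) | _ => false) .k false rfl
    (fun g => by cases g <;> rfl)
  refine ⟨R, h1, by rw [h2]; rfl, fun s hs hs' => ?_⟩
  rw [h2]
  interval_cases s <;> rfl

/-- `m` is inhibited next to `k` in `H_j` and `F_0` by making `k` and `q_0` swap. -/
lemma m_region (X : Fin m → Fin 3 → V) : ∃ R : LReg X, R.sig .mev = .free ∧
    (∀ j, R.sup (.H j) 0 = true) ∧ R.sup .F0 0 = true ∧ R.sup .F0 3 = true := by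
  obtain ⟨R, h1, h2⟩ := parity_region (X := X)
    (fun e => match e with | .k => true | .q i => decide (i.val = 0) | _ => false) .mev true rfl
    (fun g => by cases g <;> rfl)
  exact ⟨R, h1, fun j => by rw [h2]; rfl, by rw [h2]; rfl, by rw [h2]; rfl⟩

lemma inhibit_exception (hX : ∀ i, Function.Injective (X i)) {M : Set V}
    (hM : OneInThree m X M) (g : GIdx m) {l s : ℕ} (h : (l, s) ∈ exceptions g.shape) :
    ∃ R : LReg X, R.sig (interp X g l) = .free ∧ R.sup g s = true := by
  obtain ⟨r, hr⟩ : ∃ r : Fin m → Fin 3, ∀ i j, X i j ∈ M ↔ j = r i := by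
    choose r hr hr' using hM
    exact ⟨r, fun i j => ⟨hr' i j, by rintro rfl; exact hr i⟩⟩
  obtain ⟨RM, hk, hH, hF2, hF5, hT⟩ := modelRegion hr
  obtain ⟨Rm, hm, hmH, hmF0, hmF3⟩ := m_region X
  obtain ⟨Rq, hq, hqF1, hqF2⟩ := q_region X
  obtain ⟨Rt, ht, htG, htD, htT⟩ := freeRegion X true
  obtain ⟨Rf, hf, -, -, hfT⟩ := freeRegion X false
  cases g with
  | H j =>
    simp only [GIdx.shape, exceptions, List.mem_cons, Prod.mk.injEq, List.not_mem_nil,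
      or_false] at h
    rcases h with ⟨rfl, rfl⟩ | ⟨rfl, rfl⟩
    · exact ⟨RM, hk, hH j⟩
    · exact ⟨Rm, hm, hmH j⟩
  | F0 =>
    simp only [GIdx.shape, exceptions, List.mem_cons, Prod.mk.injEq, List.not_mem_nil,
      or_false] at h
    rcases h with ⟨rfl, rfl⟩ | ⟨rfl, rfl⟩ | ⟨rfl, rfl⟩ | ⟨rfl, rfl⟩
    · exact ⟨RM, hk, hF2⟩
    · exact ⟨RM, hk, hF5⟩
    · exact ⟨Rm, hm, hmF0⟩
    · exact ⟨Rm, hm, hmF3⟩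
  | F1 =>
    simp only [GIdx.shape, exceptions, List.mem_cons, Prod.mk.injEq, List.not_mem_nil,
      or_false] at h
    obtain ⟨rfl, rfl⟩ := h
    exact ⟨Rq, hq, hqF1⟩
  | F2 =>
    simp only [GIdx.shape, exceptions, List.mem_cons, Prod.mk.injEq, List.not_mem_nil,
      or_false] at h
    obtain ⟨rfl, h1, h2⟩ : l = 0 ∧ 2 ≤ s ∧ s ≤ 6 := by omega
    exact ⟨Rq, hq, hqF2 s h1 h2⟩
  | G j =>
    simp only [GIdx.shape, exceptions, List.mem_cons, Prod.mk.injEq, List.not_mem_nil,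
      or_false] at h
    rcases h with ⟨rfl, rfl⟩ | ⟨rfl, rfl⟩
    · exact ⟨Rt, ht, htG j⟩
    · obtain ⟨R, h1, h2⟩ := zRegion X (.G j) _ _ (Or.inl ⟨j, rfl, rfl, rfl⟩)
      exact ⟨R, h1, by rw [h2]; rfl⟩
  | D j =>
    simp only [GIdx.shape, exceptions, List.mem_cons, Prod.mk.injEq, List.not_mem_nil,
      or_false] at h
    rcases h with ⟨rfl, rfl⟩ | ⟨rfl, rfl⟩
    · exact ⟨Rt, ht, htD j rfl⟩
    · obtain ⟨R, h1, h2⟩ := zRegion X (.D j) _ _ (Or.inr ⟨j, rfl, rfl, rfl⟩)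
      exact ⟨R, h1, by rw [h2]; rfl⟩
  | T0 i =>
    have hw : ∀ s ≤ 12, ∃ R : LReg X, R.sig (.w i) = .free ∧ R.sup (.T0 i) s = true := by
      intro s hs
      obtain ⟨R, h1, h2⟩ := dropRegion hX i 2 (.w i) (Or.inl rfl)
      exact ⟨R, h1, by rw [h2]; exact decide_eq_true (by simpa using hs)⟩
    have hv : ∀ s, 6 ≤ s → ∃ R : LReg X, R.sig (.v (fmul4 i 0)) = .free ∧
        R.sup (.T0 i) s = true := by
      intro s hs
      obtain ⟨R, h1, h2⟩ := riseRegion hX i 0 _ (Or.inl rfl)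
      exact ⟨R, h1, by rw [h2]; exact decide_eq_true (by simp [hs])⟩
    have hdrop : ∀ (r r' : Fin 3) (s : ℕ), r < r' → s ≤ 4 + 4 * r.val →
        ∃ R : LReg X, R.sig (.a (fmul3 i r')) = .free ∧ R.sup (.T0 i) s = true := by
      intro r r' s hr hs
      obtain ⟨R, h1, h2⟩ := dropRegion hX i r _ (Or.inr ⟨r', hr, rfl⟩)
      exact ⟨R, h1, by rw [h2]; exact decide_eq_true hs⟩
    have hrise : ∀ (r r' : Fin 3) (s : ℕ), r' < r → 6 + 4 * r.val ≤ s →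
        ∃ R : LReg X, R.sig (.a (fmul3 i r')) = .free ∧ R.sup (.T0 i) s = true := by
      intro r r' s hr hs
      obtain ⟨R, h1, h2⟩ := riseRegion hX i r _ (Or.inr ⟨r', hr, rfl⟩)
      exact ⟨R, h1, by rw [h2]; exact decide_eq_true (Or.inr (Or.inr hs))⟩
    simp only [GIdx.shape, exceptions, List.mem_append, List.mem_map, List.mem_range, List.mem_cons,
      Prod.mk.injEq, List.not_mem_nil, or_false] at h
    rcases h with ⟨s, hs, rfl, rfl⟩ | ⟨rfl, rfl⟩ | ⟨rfl, rfl⟩ | ⟨rfl, rfl⟩ | ⟨rfl, rfl⟩ |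
      ⟨rfl, rfl⟩ | ⟨rfl, rfl⟩ | ⟨rfl, rfl⟩ | ⟨rfl, rfl⟩ | ⟨rfl, rfl⟩ | ⟨rfl, rfl⟩ | ⟨rfl, rfl⟩ |
      ⟨rfl, rfl⟩
    · obtain rfl | rfl | h3 : s = 0 ∨ s = 3 ∨ (s ≠ 0 ∧ s ≠ 3) := by omega
      · exact ⟨RM, hk, hT i⟩
      · exact ⟨Rt, ht, by rw [htT]; rfl⟩
      · exact ⟨Rf, hf, by rw [hfT]; exact decide_eq_true (by omega)⟩
    · exact hv _ (by norm_num)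
    · exact hv _ (by norm_num)
    · exact hv _ (by norm_num)
    · exact hw _ (by norm_num)
    · exact hw _ (by norm_num)
    · exact hw _ (by norm_num)
    · exact hrise 1 0 _ (by decide) (by norm_num)
    · exact hrise 1 0 _ (by decide) (by norm_num)
    · exact hdrop 0 1 _ (by decide) (by norm_num)
    · exact hrise 2 1 _ (by decide) (by norm_num)
    · exact hdrop 0 2 _ (by decide) (by norm_num)
    · exact hdrop 1 2 _ (by decide) (by norm_num)
  | T1 i | T2 i | T3 i => simp [GIdx.shape, exceptions] at h

/-- A one-in-three model is only needed for the exceptional pairs with label `k`; all others are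
inhibited unconditionally. -/
theorem gadget_uessp (hX : ∀ i, Function.Injective (X i)) {M : Set V}
    (hM : OneInThree m X M) : UESSP tau1 (gadget m X false) := by
  intro e g s hs
  suffices h : ∃ R : LReg X, R.sig e = .free ∧ R.sup g (gval g s) = true by
    obtain ⟨R, h1, h2⟩ := h
    exact ⟨R.toU, by simp [LReg.toU, h1, h2, Interaction.apply]⟩
  by_cases he : ∀ l ∈ g.shape.loc, interp X g l ≠ e
  · exact inhibit_absent g e he _
  push Not at he
  obtain ⟨a, ha, rfl⟩ := he
  obtain ⟨t, ht⟩ := List.mem_iff_getElem?.1 ha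
  obtain ⟨h1, h2⟩ := not_label hs
  have hprev : gval g s = 0 ∨ g.shape.loc[gval g s - 1]? ≠ some a :=
    (Nat.eq_zero_or_pos _).imp_right fun hpos hl => h2 _ a (by omega) hl rfl
  rcases exists_parity g.shape (a, t) (List.mem_zipIdx_iff_getElem?.2 ht) (gval g s)
    (Nat.lt_succ_of_le (gval_le g s)) (fun hl => h1 a hl rfl) hprev with
    ⟨b, hb, hab, hbad, hpar⟩ | hex
  · have hab' : interp X g a ≠ interp X g b := fun h => hab (interp_injective hX g ha hb h)
    refine inhibit_parity (F := fun f => decide (f = interp X g b)) (decide_eq_false hab')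
      (compat_single hX hab' ?_) ht rfl ?_
    · rw [← badLoc_eq g ha hb]
      exact hbad
    · rw [par_single hX g hb, par_single hX g hb]
      exact hpar
  · exact inhibit_exception hX hM g hex

/-! ### State separation of the gadget union -/

/-- The pairs of states of a shape that no region with a single `swap`-event and otherwise only
`nop`-events separates. -/
def sspExceptions : Shape → List (ℕ × ℕ)
  | .G => [(1, 5), (2, 4)]
  | .T0 => [(2, 6), (2, 10), (2, 14), (6, 10), (6, 14), (10, 14), (3, 5), (7, 9), (11, 13)]
  | _ => []

lemma exists_odd (sh : Shape) : ∀ s' ≤ sh.loc.length, ∀ s < s',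
    (∃ b ∈ sh.loc, parL (fun l => l == b) sh.loc s ≠ parL (fun l => l == b) sh.loc s') ∨
    (s, s') ∈ sspExceptions sh := by
  cases sh <;> decide +kernel

lemma exists_odd_last (sh : Shape) : ∀ s < sh.loc.length,
    ∃ b ∈ sh.loc,
      parL (fun l => l == b) sh.loc s ≠ parL (fun l => l == b) sh.loc sh.loc.length := by
  cases sh <;> decide +kernel

/-- The region in which a single event is `swap`, with prescribed value `false` at a state. -/
lemma swap_region (hX : ∀ i, Function.Injective (X i)) (g : GIdx m) {b s s' : ℕ}
    (hb : b ∈ g.shape.loc)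
    (h : parL (fun l => l == b) g.shape.loc s ≠ parL (fun l => l == b) g.shape.loc s') :
    ∃ R : LReg X, R.sup g s = true ∧ R.sup g s' = false := by
  rw [← par_single hX g hb, ← par_single hX g hb] at h
  refine ⟨parReg X (fun f => decide (f = interp X g b)) (fun _ => false)
    (fun _ => par X (fun f => decide (f = interp X g b)) g s') (by simp), ?_, ?_⟩
  · simp only [parReg]
    revert h
    cases par X _ g s <;> cases par X _ g s' <;> simp
  · simp [parReg]

lemma separate_lt (hX : ∀ i, Function.Injective (X i)) (g : GIdx m) {s s' : ℕ}
    (h : s < s') (hs' : s' ≤ g.shape.loc.length) :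
    ∃ R : LReg X, R.sup g s ≠ R.sup g s' := by
  rcases exists_odd g.shape s' hs' s h with ⟨b, hb, hp⟩ | hex
  · obtain ⟨R, h1, h2⟩ := swap_region hX g hb hp
    exact ⟨R, by rw [h1, h2]; simp⟩
  cases g with
  | G j =>
    obtain ⟨R, -, h2⟩ := zRegion X (.G j) _ _ (Or.inl ⟨j, rfl, rfl, rfl⟩)
    refine ⟨R, ?_⟩
    rw [h2, h2]
    revert hex; clear h hs' h2
    simp only [GIdx.shape, sspExceptions, List.mem_cons, Prod.mk.injEq, List.not_mem_nil, or_false]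
    rintro (⟨rfl, rfl⟩ | ⟨rfl, rfl⟩) <;> decide
  | D j =>
    obtain ⟨R, -, h2⟩ := zRegion X (.D j) _ _ (Or.inr ⟨j, rfl, rfl, rfl⟩)
    refine ⟨R, ?_⟩
    rw [h2, h2]
    revert hex; clear h hs' h2
    simp only [GIdx.shape, sspExceptions, List.mem_cons, Prod.mk.injEq, List.not_mem_nil, or_false]
    rintro (⟨rfl, rfl⟩ | ⟨rfl, rfl⟩) <;> decide
  | T0 i =>
    have key : ∃ r : Fin 3, s ≤ 4 + 4 * r.val ∧ 4 + 4 * r.val < s' := by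
      revert hex; clear h hs'
      simp only [GIdx.shape, sspExceptions, List.mem_cons, Prod.mk.injEq, List.not_mem_nil,
        or_false]
      rintro (⟨rfl, rfl⟩ | ⟨rfl, rfl⟩ | ⟨rfl, rfl⟩ | ⟨rfl, rfl⟩ | ⟨rfl, rfl⟩ | ⟨rfl, rfl⟩ |
        ⟨rfl, rfl⟩ | ⟨rfl, rfl⟩ | ⟨rfl, rfl⟩) <;> decide
    obtain ⟨r, h1, h2⟩ := key
    obtain ⟨R, -, h3⟩ := dropRegion hX i r (.w i) (Or.inl rfl)
    refine ⟨R, ?_⟩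
    rw [h3, h3, decide_eq_true h1, decide_eq_false (by omega)]
    simp
  | H j | F0 | F1 | F2 | T1 i | T2 i | T3 i => simp [GIdx.shape, sspExceptions] at hex

theorem gadget_ussp (hX : ∀ i, Function.Injective (X i)) : USSP tau1 (gadget m X false) := by
  intro g s s' hne
  rcases Nat.lt_or_gt_of_ne ((gval_injective g).ne hne) with h | h
  · obtain ⟨R, hR⟩ := separate_lt hX g h (gval_le g s')
    exact ⟨R.toU, hR⟩
  · obtain ⟨R, hR⟩ := separate_lt hX g h (gval_le g s)
    exact ⟨R.toU, hR.symm⟩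

lemma gval_init (g : GIdx m) : gval g (gadget m X false g).init = g.shape.loc.length := by
  cases g <;> rfl

/-- Every state other than the initial one can get support `1` while the initial state gets `0`. -/
theorem gadget_init_sep (hX : ∀ i, Function.Injective (X i)) (g : GIdx m) (s : GS m g)
    (hs : s ≠ (gadget m X false g).init) : ∃ R : URegion tau1 (gadget m X false),
      R.sup ⟨g, (gadget m X false g).init⟩ = false ∧ R.sup ⟨g, s⟩ = true := by
  have hne := (gval_injective g).ne hs
  rw [gval_init] at hne
  obtain ⟨b, hb, hp⟩ := exists_odd_last g.shape _ (lt_of_le_of_ne (gval_le g s) hne)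
  obtain ⟨R, h1, h2⟩ := swap_region hX g hb hp
  exact ⟨R.toU, by simpa only [LReg.toU, gval_init] using h2, h1⟩

end

section
variable {V : Type} {m : ℕ} {X : Fin m → Fin 3 → V}

/-! ### From an inhibiting region to a one-in-three model -/

section edges
variable {i : Interaction} {a b c : Bool}

lemma tau1_cases (hi : i ∈ tau1) : i = .nop ∨ i = .set ∨ i = .swap ∨ i = .free := by
  simpa [tau1] using hi

lemma edgeOK_free_both (h : EdgeOK .free .both a b) : a = false ∧ b = false := by
  revert h; cases a <;> cases b <;> simp [EdgeOK, Interaction.apply, Dir.allowsFwd, Dir.allowsBwd]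

lemma edgeOK_set_both (h : EdgeOK .set .both a b) : a = true ∧ b = true := by
  revert h; cases a <;> cases b <;> simp [EdgeOK, Interaction.apply, Dir.allowsFwd, Dir.allowsBwd]

lemma edgeOK_swap_both (h : EdgeOK .swap .both a b) : b = !a := by
  revert h; cases a <;> cases b <;> simp [EdgeOK, Interaction.apply, Dir.allowsFwd, Dir.allowsBwd]

lemma edgeOK_nop_both (h : EdgeOK .nop .both a b) : a = b := by
  revert h; cases a <;> cases b <;> simp [EdgeOK, Interaction.apply, Dir.allowsFwd, Dir.allowsBwd]

/-- Only `swap` changes the support along a two-way edge. -/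
lemma eq_swap_of_ne (hi : i ∈ tau1) (h : EdgeOK i .both a b) (hab : b = !a) : i = .swap := by
  subst hab
  rcases tau1_cases hi with rfl | rfl | rfl | rfl
  · simpa using edgeOK_nop_both h
  · simpa using edgeOK_set_both h
  · rfl
  · simpa using edgeOK_free_both h

lemma eq_of_ne_swap (hi : i ∈ tau1) (h : EdgeOK i .both a b) (hs : i ≠ .swap) : a = b := by
  by_contra hab
  refine hs (eq_swap_of_ne hi h ?_)
  revert hab; cases a <;> cases b <;> simp

/-- Across the two `X_{i,r}`-edges of `T_{i,0}` the support can change only if `X_{i,r}` is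
`set`. -/
lemma eq_across_of_ne_set (hi : i ∈ tau1) (hs : i ≠ .set) (h : EdgeOK i .both a b)
    (h' : EdgeOK i .bwd b c) : a = c := by
  rw [edgeOK_both] at h
  rw [edgeOK_bwd] at h'
  rcases tau1_cases hi with rfl | rfl | rfl | rfl
  · revert h h'; cases a <;> cases b <;> cases c <;> simp [Interaction.apply]
  · exact absurd rfl hs
  · revert h h'; cases a <;> cases b <;> cases c <;> simp [Interaction.apply]
  · revert h h'; cases a <;> cases b <;> cases c <;> simp [Interaction.apply]

/-- The part of `G_j` and `D_l` between the two `k`-edges: if `z` is `nop` or `swap`, the last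
event of this part, here `i`, is not `swap`, because `y` and `z` change the support evenly often. -/
lemma ne_swap_of_chain {y z : Interaction} {s : ℕ → Bool} (hy : y ∈ tau1)
    (hi : i ∈ tau1) (hz : z = .nop ∨ z = .swap) (h1 : s 1 = false) (h6 : s 6 = false)
    (e1 : EdgeOK y .both (s 1) (s 2)) (e2 : EdgeOK z .fwd (s 2) (s 3))
    (e3 : EdgeOK z .both (s 3) (s 4)) (e4 : EdgeOK y .both (s 4) (s 5))
    (e5 : EdgeOK i .both (s 5) (s 6)) : i ≠ .swap := by
  have h24 : s 2 = s 4 := by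
    rw [edgeOK_fwd] at e2
    rcases hz with rfl | rfl
    · simp only [Interaction.apply, Option.some.injEq] at e2
      rw [e2, edgeOK_nop_both e3]
    · simp only [Interaction.apply, Option.some.injEq] at e2
      rw [edgeOK_swap_both e3, ← e2, Bool.not_not]
  have h5 : s 5 = false := by
    by_cases hs : y = .swap
    · subst hs
      rw [edgeOK_swap_both e4, ← h24, edgeOK_swap_both e1, h1]; rfl
    · rw [← eq_of_ne_swap hy e4 hs, ← h24, ← eq_of_ne_swap hy e1 hs, h1]
  rintro rfl
  have := edgeOK_swap_both e5
  simp [h5, h6] at this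

end edges

/-- The variables whose events are `set` in a region with `k` free and some `h_{j,2}` in the support
form a one-in-three model: `k` free forces `m`, all `v_j` and `q_1` to be `swap`, hence `z` to be
`nop` or `swap`, hence no `w_i` and no `a_l` to be `swap`. On `T_{i,0}` only a `set`-event among the
`X_{i,r}` can then undo the change made by `v_{4i}`, and `T_{i,1}`, `T_{i,2}`, `T_{i,3}` exclude two
such events. -/
theorem oneInThree_of_edges {sig : GEvent V m → Interaction} {sup : GIdx m → ℕ → Bool}
    (mem : ∀ e, sig e ∈ tau1) (ok : ∀ g, ChainOK sig (sup g) 0 (gspec X g)) (hk : sig .k = .free)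
    {j₀ : Fin (4 * m)} (hj : sup (.H j₀) 2 = true) :
    OneInThree m X {vv | sig (.x vv) = .set} := by
  have hH := fun j => ok (.H j)
  have hF0 := ok .F0
  have hF2 := ok .F2
  have hG := fun j => ok (.G j)
  have hD := fun j => ok (.D j)
  have hT0 := fun i => ok (.T0 i)
  have hT1 := fun i => ok (.T1 i)
  have hT2 := fun i => ok (.T2 i)
  have hT3 := fun i => ok (.T3 i)
  simp only [gspec_H, gspec_F0, gspec_F2, gspec_G, gspec_D, gspec_T0, gspec_T1, gspec_T2, gspec_T3,
    ChainOK, zero_add, Nat.reduceAdd, hk, and_true] at hH hF0 hF2 hG hD hT0 hT1 hT2 hT3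
  have hm : sig .mev = .swap := by
    obtain ⟨e0, e1, -⟩ := hH j₀
    exact eq_swap_of_ne (mem _) e1 (by rw [(edgeOK_free_both e0).2, hj]; rfl)
  rw [hm] at hF0
  simp only [hm] at hH
  have hv : ∀ j, sig (.v j) = .swap := by
    intro j
    obtain ⟨e0, e1, e2, e3, -⟩ := hH j
    refine eq_swap_of_ne (mem _) e2 ?_
    rw [(edgeOK_free_both e3).1, edgeOK_swap_both e1, (edgeOK_free_both e0).2]; rfl
  have hq : sig (.q 1) = .swap := by
    obtain ⟨-, -, -, e3, e4, e5, e6, -⟩ := hF0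
    refine eq_swap_of_ne (mem _) e5 ?_
    rw [(edgeOK_free_both e6).1, edgeOK_swap_both e4, (edgeOK_free_both e3).2]; rfl
  have hz : sig .z = .nop ∨ sig .z = .swap := by
    obtain ⟨-, -, -, e3, e4, e5, -⟩ := hF2
    rw [hq] at e4
    have h4 := edgeOK_swap_both e4
    rcases tau1_cases (mem .z) with h | h | h | h
    · exact Or.inl h
    · rw [h] at e3 e5
      rw [(edgeOK_set_both e3).2, (edgeOK_set_both e5).1] at h4
      cases h4
    · exact Or.inr h
    · rw [h] at e3 e5
      rw [(edgeOK_free_both e3).2, (edgeOK_free_both e5).1] at h4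
      cases h4
  have hw : ∀ j, sig (.w j) ≠ .swap := by
    intro j
    obtain ⟨e0, e1, e2, e3, e4, e5, e6, -⟩ := hG j
    exact ne_swap_of_chain (mem _) (mem _) hz (edgeOK_free_both e0).2 (edgeOK_free_both e6).1
      e1 e2 e3 e4 e5
  have ha : ∀ l, sig (.a l) ≠ .swap := by
    intro j
    obtain ⟨e0, e1, e2, e3, e4, e5, e6, -⟩ := hD j
    exact ne_swap_of_chain (mem _) (mem _) hz (edgeOK_free_both e0).2 (edgeOK_free_both e6).1
      e1 e2 e3 e4 e5
  simp only [hv] at hT0 hT1 hT2 hT3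
  -- two `set`-events of a clause surround a `v`-edge with support `1` on both sides
  have hpair : ∀ {f f' : GEvent V m} {s : ℕ → Bool}, EdgeOK (sig f) .both (s 0) (s 1) →
      EdgeOK .swap .both (s 1) (s 2) → EdgeOK (sig f') .both (s 2) (s 3) →
      sig f = .set → sig f' = .set → False := by
    intro f f' s e0 e1 e2 h h'
    rw [h] at e0
    rw [h'] at e2
    have := edgeOK_swap_both e1
    rw [(edgeOK_set_both e0).2, (edgeOK_set_both e2).1] at this
    cases this
  intro i
  have hex : ∃ r, sig (.x (X i r)) = .set := by
    by_contra! hno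
    obtain ⟨e0, e1, e2, e3, e4, e5, e6, e7, e8, e9, e10, e11, e12, e13, e14, e15, -⟩ := hT0 i
    have h1 := (edgeOK_free_both e0).2
    have h2 := edgeOK_swap_both e1
    have h3 := eq_of_ne_swap (mem _) e2 (ha _)
    have h4 := eq_across_of_ne_set (mem _) (hno 0) e3 e4
    have h5 := eq_of_ne_swap (mem _) e5 (ha _)
    have h6 := eq_of_ne_swap (mem _) e6 (ha _)
    have h7 := eq_across_of_ne_set (mem _) (hno 1) e7 e8
    have h8 := eq_of_ne_swap (mem _) e9 (ha _)
    have h9 := eq_of_ne_swap (mem _) e10 (ha _)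
    have h10 := eq_across_of_ne_set (mem _) (hno 2) e11 e12
    have h11 := eq_of_ne_swap (mem _) e13 (ha _)
    have h12 := eq_of_ne_swap (mem _) e14 (hw _)
    have h13 := (edgeOK_free_both e15).1
    rw [h1, h3, h4, h5, h6, h7, h8, h9, h10, h11, h12, h13] at h2
    cases h2
  have h01 : ¬ (sig (.x (X i 0)) = .set ∧ sig (.x (X i 1)) = .set) := fun h =>
    hpair (hT1 i).1 (hT1 i).2.1 (hT1 i).2.2.1 h.1 h.2
  have h02 : ¬ (sig (.x (X i 0)) = .set ∧ sig (.x (X i 2)) = .set) := fun h =>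
    hpair (hT2 i).1 (hT2 i).2.1 (hT2 i).2.2.1 h.1 h.2
  have h12 : ¬ (sig (.x (X i 1)) = .set ∧ sig (.x (X i 2)) = .set) := fun h =>
    hpair (hT3 i).1 (hT3 i).2.1 (hT3 i).2.2.1 h.1 h.2
  obtain ⟨r, hr⟩ := hex
  refine ⟨r, hr, fun r' hr' => ?_⟩
  simp only [Set.mem_ofPred_eq] at hr'
  have h3 : ∀ s : Fin 3, s = 0 ∨ s = 1 ∨ s = 2 := by decide
  rcases h3 r with rfl | rfl | rfl <;> rcases h3 r' with rfl | rfl | rfl <;>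
    first
    | rfl
    | exact (h01 ⟨hr, hr'⟩).elim
    | exact (h01 ⟨hr', hr⟩).elim
    | exact (h02 ⟨hr, hr'⟩).elim
    | exact (h02 ⟨hr', hr⟩).elim
    | exact (h12 ⟨hr, hr'⟩).elim
    | exact (h12 ⟨hr', hr⟩).elim

lemma chainOK_of_getElem {sig : GEvent V m → Interaction} {sup : ℕ → Bool}
    {l : List (GEvent V m × Dir)} {t₀ : ℕ}
    (h : ∀ t q, l[t]? = some q → EdgeOK (sig q.1) q.2 (sup (t₀ + t)) (sup (t₀ + t + 1))) :
    ChainOK sig sup t₀ l := by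
  induction l generalizing t₀ with
  | nil => trivial
  | cons q l ih =>
    refine ⟨h 0 q rfl, ih fun t q' hq' => ?_⟩
    rw [Nat.succ_add_eq_add_succ]
    exact h (t + 1) q' (by simpa using hq')

/-- A two-way edge followed by an edge with the same label is followed by a backward edge. -/
lemma dir_succ (sh : Shape) : ∀ t < sh.loc.length, (sh.dir t).allowsBwd = true →
    sh.loc[t + 1]? = sh.loc[t]? → (sh.dir (t + 1)).allowsFwd = false := by
  cases sh <;> decide +kernel

lemma gval_surjective (g : GIdx m) {t : ℕ} (ht : t ≤ g.shape.loc.length) :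
    ∃ s, gval g s = t := by
  cases g <;> exact ⟨⟨t, Nat.lt_succ_of_le ht⟩, rfl⟩

variable [DecidableEq V]

lemma gadget_fwd {g : GIdx m} {s s' : GS m g} {e : GEvent V m} {d : Dir}
    (hd : (gspec X g)[gval g s]? = some (e, d)) (h : d.allowsFwd = true)
    (hs : gval g s' = gval g s + 1) : (gadget m X false g).delta s e = some s' := by
  cases g <;>
  · refine (chainTS_fwd hd h (by rw [← hs]; exact Fin.isLt _)).trans (congrArg some ?_)
    exact Fin.ext hs.symm

lemma gadget_bwd {g : GIdx m} {s s' : GS m g} {e : GEvent V m} {d : Dir}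
    (hd : (gspec X g)[gval g s]? = some (e, d)) (h : d.allowsBwd = true)
    (hs : gval g s' = gval g s + 1)
    (hn : ∀ d', (gspec X g)[gval g s + 1]? = some (e, d') → d'.allowsFwd = false) :
    (gadget m X false g).delta s' e = some s := by
  cases g <;>
  · have hlt := lt_of_eq_of_lt hs.symm (Fin.isLt s')
    have hs' : s' = ⟨_, hlt⟩ := Fin.ext hs
    rw [hs']
    exact chainTS_bwd hd h hlt hn

/-- A region of the union, restricted to a gadget, as a labelling of the path of the gadget. -/
lemma region_chainOK (hX : ∀ i, Function.Injective (X i)) (R : URegion tau1 (gadget m X false))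
    (g : GIdx m) : ∃ sup : ℕ → Bool, (∀ s, sup (gval g s) = R.sup ⟨g, s⟩) ∧
      ChainOK R.sig sup 0 (gspec X g) := by
  have : Nonempty (GS m g) := ⟨(gadget m X false g).init⟩
  have hinv := Function.leftInverse_invFun (gval_injective g)
  refine ⟨fun t => R.sup ⟨g, Function.invFun (gval g) t⟩, fun s => ?_, chainOK_of_getElem ?_⟩
  · simp only [hinv s]
  · rintro t ⟨e, d⟩ hq
    simp only [zero_add]
    have hq' := hq
    rw [gspec_getElem?, Option.map_eq_some_iff] at hq'
    obtain ⟨l, hl, hle⟩ := hq'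
    obtain ⟨rfl, rfl⟩ := Prod.mk.inj hle
    have hlt := (List.getElem?_eq_some_iff.1 hl).1
    obtain ⟨s, rfl⟩ := gval_surjective g hlt.le
    obtain ⟨s', hs'⟩ := gval_surjective g (Nat.succ_le_of_lt hlt)
    have hs1 : gval g s' = gval g s + 1 := hs'
    rw [← hs1, hinv s, hinv s']
    refine ⟨fun h => R.consistent g s _ s' (gadget_fwd hq h hs1),
      fun h => R.consistent g s' _ s (gadget_bwd hq h hs1 fun d' hd' => ?_)⟩
    rw [gspec_getElem?, Option.map_eq_some_iff] at hd'
    obtain ⟨l', hl', hle'⟩ := hd'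
    obtain ⟨hi, rfl⟩ := Prod.mk.inj hle'
    refine dir_succ _ _ hlt h ?_
    rw [hl', hl, interp_injective hX g (List.mem_of_getElem? hl') (List.mem_of_getElem? hl) hi]

/-- The ESSP provides a region inhibiting `k` at `h_{0,2}`, which yields a one-in-three model. -/
theorem exists_oneInThree (hm : 0 < m) (hX : ∀ i, Function.Injective (X i))
    (h : UESSP tau1 (gadget m X false)) : ∃ M : Set V, OneInThree m X M := by
  obtain ⟨R, hR⟩ := h .k (.H (hidx hm)) (2 : Fin 6) rfl
  have hR' : R.sig .k = .free ∧ R.sup (h02 hm) = true := by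
    rcases tau1_cases (R.sig_mem .k) with hk | hk | hk | hk <;> rw [hk] at hR
    · cases hR
    · cases hR
    · cases hR
    · refine ⟨hk, ?_⟩
      by_contra hf
      change Interaction.apply .free (R.sup (h02 hm)) = none at hR
      rw [Bool.eq_false_of_not_eq_true hf] at hR
      cases hR
  choose sup hsup hok using region_chainOK hX R
  exact ⟨_, oneInThree_of_edges R.sig_mem hok hR'.1 (j₀ := hidx hm)
    ((hsup (.H (hidx hm)) (2 : Fin 6)).trans hR'.2)⟩

end

/-! ### Re-indexing the union and restricting regions of the joining -/

section transport
variable {τ : Set Interaction}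

/-- A region of the joining restricts to a region of the union. -/
lemma uessp_of_joining {n : ℕ} {S : Fin n → Type} {E : Type} {U : Union (Fin n) S E}
    (h : ESSP τ (joining U)) : UESSP τ U := by
  intro e i s hs
  obtain ⟨R, hR⟩ := h (Sum.inl ⟨i, s⟩) (Sum.inl e) (by simp [joining, hs])
  exact ⟨{ sup := fun p => R.sup (Sum.inl p)
           sig := fun e => R.sig (Sum.inl e)
           sig_mem := fun e => R.sig_mem _
           consistent := fun i s e s' hd => R.consistent _ _ _ (by simp [joining, hd]) }, hR⟩

variable {ι κ : Type} {S : ι → Type} {E : Type} (f : κ ≃ ι) {U : Union ι S E}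

/-- A region of a union as a region of the re-indexed union. -/
def URegion.reindex (R : URegion τ U) : URegion τ (S := fun j => S (f j)) fun j => U (f j) where
  sup p := R.sup ⟨f p.1, p.2⟩
  sig := R.sig
  sig_mem := R.sig_mem
  consistent j := R.consistent (f j)

/-- A region of a re-indexed union as a region of the original union. -/
def URegion.unreindex (R : URegion τ (S := fun j => S (f j)) fun j => U (f j)) :
    URegion τ U where
  sup p := R.sup ((Equiv.sigmaCongrLeft f).symm p)
  sig := R.sig
  sig_mem := R.sig_mem
  consistent i s e s' h := by
    obtain ⟨j, rfl⟩ := f.surjective i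
    have key : ∀ s : S (f j), (Equiv.sigmaCongrLeft f).symm ⟨f j, s⟩ = ⟨j, s⟩ := fun s =>
      (Equiv.sigmaCongrLeft f).symm_apply_eq.2 rfl
    rw [key, key]
    exact R.consistent j s e s' h

lemma uessp_of_reindex (h : UESSP τ (S := fun j => S (f j)) fun j => U (f j)) : UESSP τ U := by
  intro e i s hs
  obtain ⟨j, rfl⟩ := f.surjective i
  obtain ⟨R, hR⟩ := h e j s hs
  refine ⟨R.unreindex f, ?_⟩
  have key : (Equiv.sigmaCongrLeft f).symm ⟨f j, s⟩ = ⟨j, s⟩ :=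
    (Equiv.sigmaCongrLeft f).symm_apply_eq.2 rfl
  change (R.sig e).apply (R.sup _) = none
  rw [key]
  exact hR

end transport

/-- For `τ = {nop, set, swap, free}`: `φ` has a one-in-three
model iff `U^{σ1}_φ` has the `τ`-SSP and the `τ`-ESSP, and equivalently iff the
joining `A(U^{σ1}_φ)` is `τ`-feasible. -/
theorem sigma1_reduction_correct {V : Type} [Fintype V] [DecidableEq V]
    (m : ℕ) (hm : 0 < m) (X : Fin m → Fin 3 → V) (hφ : Cubic m X) :
    ((∃ M : Set V, OneInThree m X M) ↔
      (USSP tau1 (gadget m X false) ∧ UESSP tau1 (gadget m X false))) ∧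
    ((∃ M : Set V, OneInThree m X M) ↔
      Feasible tau1 (joining (gadgetFin m X false))) := by
  have hback := exists_oneInThree hm hφ.1
  let f : Fin (Fintype.card (GIdx m)) ≃ GIdx m := (Fintype.equivFin (GIdx m)).symm
  refine ⟨⟨fun ⟨M, hM⟩ => ⟨gadget_ussp hφ.1, gadget_uessp hφ.1 hM⟩, fun h => hback h.2⟩,
    ⟨fun ⟨M, hM⟩ => ?_, fun h => hback (uessp_of_reindex f (uessp_of_joining h.2))⟩⟩
  refine joining_feasible _ (f.symm .F0) (fun j s s' hs => ?_) (fun e j s hs => ?_)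
    fun j s hs => ?_
  · obtain ⟨R, hR⟩ := gadget_ussp hφ.1 (f j) s s' hs
    exact ⟨R.reindex f, hR⟩
  · obtain ⟨R, hR⟩ := gadget_uessp hφ.1 hM e (f j) s hs
    exact ⟨R.reindex f, hR⟩
  · obtain ⟨R, hR⟩ := gadget_init_sep hφ.1 (f j) s hs
    exact ⟨R.reindex f, hR⟩

end PetriNets
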